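/- Let M : S → ℂ with M(1) = 1, let L be its admissible cumulants, and let W be a weight function on S with W(1) = 1 and W(st) = W(ts) for all s,t ∈ S, and let Q > 1/2. If ‖M{z,w}‖_W < 2 − 1/Q and ‖L{z,0}‖_W < ∞, then all terms of the identity L{z,w} = L{z,0} + (M_⋆{z,w} − M{z,0}) ⋆ M_⋆^{−1}{z,w} have finite ‖·‖_{W̃}-norm, where W̃(s) = W(s)Q^{−m(s)} and m(s) is the number of occurrences of w in s; in particular ‖M_⋆^{−1}{z,w}‖_{W̃} ≤ Q, ‖M_⋆{z,w}‖_{W̃} < 2 − 1/Q, L{z,w} ∈ l¹(S,W̃), and the identity holds in the Banach algebra l¹(S,W̃). -/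

import Mathlib

/-- The two-letter alphabet `{z, w}`. -/
inductive Letter | z | w
deriving DecidableEq

/-- Words: elements of the free monoid `S = FS({z,w})`. -/
abbrev Word := List Letter

/-- The convolution product of the semigroup algebra `A(S)`:
`(f ⋆ g)(s) = Σ_{uv = s} f(u) g(v)`. -/
noncomputable def conv (f g : Word → ℂ) (s : Word) : ℂ :=
  ∑ i ∈ Finset.range (s.length + 1), f (s.take i) * g (s.drop i)

open scoped ENNReal

/-- The weighted `l¹`-norm `‖f‖_W = Σ_{s ∈ S} W(s)|f(s)|`, valued in `[0,∞]`. -/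
noncomputable def normW (W : Word → ℝ) (f : Word → ℂ) : ℝ≥0∞ :=
  ∑' s : Word, ENNReal.ofReal (W s * ‖f s‖)

/-- `G` is the prefix-accumulating form of the composition `f_{⋆g}` of Definition 6.2:
`G(pre, s) = f(pre ++ s)` if `s` has no `w`, and if `s = z^a w^k rest` with `k ≥ 1`
maximal, the leading `z`-run of `s` is split in all possible ways, each removed part
`z^{a-c}` contributing a factor `g(z^{a-c})`.  Then `f_{⋆g}(s) = G([], s)`. -/
def IsStarAux (f g : Word → ℂ) (G : Word → Word → ℂ) : Prop :=
  (∀ pre s : Word, Letter.w ∉ s → G pre s = f (pre ++ s)) ∧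
    ∀ (pre : Word) (a k : ℕ) (rest : Word), 1 ≤ k → rest.head? ≠ some Letter.w →
      G pre (List.replicate a Letter.z ++ List.replicate k Letter.w ++ rest) =
        ∑ c ∈ Finset.range (a + 1),
          g (List.replicate (a - c) Letter.z) *
            G (pre ++ List.replicate c Letter.z ++ List.replicate k Letter.w) rest

/-- `n(s)! = n₁!n₂!⋯n_p!` for `s = z^{n₁} w^{k₁} z^{n₂} ⋯ w^{k_{p−1}} z^{n_p}`:
the product of the factorials of the lengths of the maximal `z`-runs of `s`. -/
def nFact (s : Word) : ℕ :=
  ((s.splitOn Letter.w).map fun r => r.length.factorial).prod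

/-- `s` is a partition of the index set of a word into blocks; see `IsCumulants`. -/
def letterAt (s : Word) (j : ℕ) : Letter := s.getD j Letter.z

/-- `P` is a partition of the finite set of positions `g ⊆ ℕ` into nonempty blocks. -/
def IsPartitionOn (g : Finset ℕ) (P : Finset (Finset ℕ)) : Prop :=
  (∀ b ∈ P, b.Nonempty) ∧ (P : Set (Finset ℕ)).PairwiseDisjoint id ∧ P.sup id = g

/-- The position `j` is inner with respect to the block `b`. -/
def InnerPos (j : ℕ) (b : Finset ℕ) : Prop :=
  j ∉ b ∧ ∃ i ∈ b, ∃ k ∈ b, i < j ∧ j < k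

/-- A partition is admissible if no block contains a letter `w` that is inner
with respect to another block. -/
def Admissible (s : Word) (P : Finset (Finset ℕ)) : Prop :=
  ∀ b ∈ P, ∀ b' ∈ P, b ≠ b' → ∀ j ∈ b, letterAt s j = Letter.w → ¬ InnerPos j b'

open scoped Classical in
/-- The set `AP(s)` of admissible partitions of the positions `g` of the word `s`. -/
noncomputable def APfin (s : Word) (g : Finset ℕ) : Finset (Finset (Finset ℕ)) :=
  g.powerset.powerset.filter fun P => IsPartitionOn g P ∧ Admissible s P

/-- The subword of `s` determined by a set of positions `b`. -/
def wordOf (s : Word) (b : Finset ℕ) : Word :=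
  (b.sort (· ≤ ·)).map (letterAt s)

/-- `L` is the family of admissible cumulants of the moment function `M`. -/
def IsCumulants (M L : Word → ℂ) : Prop :=
  ∀ s : Word, s ≠ [] →
    M s = ∑ P ∈ APfin s (Finset.range s.length), ∏ b ∈ P, L (wordOf s b)

/-- The moment generating function `M{z,w}(s) = M(s)/n(s)!`. -/
noncomputable def genFun (M : Word → ℂ) (s : Word) : ℂ := M s / (nFact s : ℂ)

open scoped Classical in
/-- The restriction `f{z,0}` of `f` to `S(z)`, extended by `0`. -/
noncomputable def restrZ (f : Word → ℂ) (s : Word) : ℂ :=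
  if Letter.w ∈ s then 0 else f s

open scoped Classical in
/-- `δf = f − f{z,0}`. -/
noncomputable def deltaF (f : Word → ℂ) (s : Word) : ℂ :=
  if Letter.w ∈ s then f s else 0

/-!
Sort the admissible partitions of a word by the block `D` of its first `w`. Admissibility means that
no `w` outside `D` precedes the last element of `D` and that no block of the rest crosses a `w` of
`D`, so the rest splits into the words between consecutive `w`s of `D` and a tail, and the sum over
its partitions is a product of moments. Each gap between the `w`s of `D` is a run of `z`s, and
choosing which of them belong to `D` produces a binomial coefficient, which turns into a convolution
after division by the factorials. In terms of `m = M{z,w}` and `l = L{z,w}` the result is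
`m = m{z,0} + (δl)_{⋆m} ⋆ m`, where `δl = l - l{z,0}`.

Composition `f ↦ f_{⋆g}` is the substitution of `g ⋆ w` for `w`, hence an algebra homomorphism, and
`(f_{⋆g})_{⋆h} = f_{⋆(g⋆h)}`. Composing the formula for `m` with the inverse of `m{z,0}` therefore
gives `M_⋆ - m{z,0} = δl ⋆ M_⋆`. For the norms, a function `f` with `f(1) = 1` has the inverse
`∑ (1 - f)^n`, whose norm is at most `1 / (2 - ‖f‖)`. Applied to `m{z,0}` this bounds its inverse by
`Q`, so that each inserted factor costs at most `Q`, which is what `Q^{-m(s)}` compensates; hence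
`‖M_⋆‖_{W̃} ≤ ‖m‖_W`, and the same estimate applies to the inverse of `M_⋆`.
-/

open scoped Nat

section Words

instance : Finite Letter :=
  Finite.of_injective (fun x : Letter => decide (x = Letter.z)) fun x y h => by
    cases x <;> cases y <;> simp_all

theorem eq_replicate_of_w_notMem {r : Word} (hr : Letter.w ∉ r) :
    r = List.replicate r.length Letter.z :=
  List.eq_replicate_of_mem fun x hx => by cases x <;> trivial

@[elab_as_elim]
theorem run_induction {P : Word → Prop} (run : ∀ r, Letter.w ∉ r → P r)
    (run_append_w : ∀ r t, Letter.w ∉ r → P t → P (r ++ Letter.w :: t)) (s : Word) : P s := by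
  suffices ∀ r : Word, Letter.w ∉ r → P (r ++ s) from this [] List.not_mem_nil
  induction s with
  | nil => intro r hr; simpa using run r hr
  | cons x s ih =>
    intro r hr
    cases x with
    | z => simpa using ih (r ++ [Letter.z]) (by simpa using hr)
    | w => exact run_append_w r s hr (ih [] List.not_mem_nil)

theorem nFact_of_w_notMem {r : Word} (hr : Letter.w ∉ r) : nFact r = r.length ! := by
  have hsplit : r.splitOn Letter.w = [r] := by
    rw [List.splitOn_eq_splitOnP]
    exact List.splitOnP_eq_singleton fun x hx => by
      simpa using fun h : x = Letter.w => hr (h ▸ hx)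
  simp [nFact, hsplit]

theorem nFact_append_w (u v : Word) : nFact (u ++ Letter.w :: v) = nFact u * nFact v := by
  simp [nFact, List.splitOn_eq_splitOnP, List.splitOnP_append_cons]

theorem nFact_ne_zero (s : Word) : nFact s ≠ 0 :=
  List.prod_ne_zero (by simp [Nat.factorial_ne_zero])

end Words

section Convolution

theorem conv_nil (f g : Word → ℂ) : conv f g [] = f [] * g [] := by
  simp [conv]

theorem conv_cons (f g : Word → ℂ) (x : Letter) (s : Word) :
    conv f g (x :: s) = f [] * g (x :: s) + conv (fun t => f (x :: t)) g s := by
  simp only [conv, List.length_cons, Finset.sum_range_succ' _ (s.length + 1), List.take_succ_cons,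
    List.drop_succ_cons, List.take_zero, List.drop_zero]
  rw [add_comm]

theorem conv_congr {f f' g g' : Word → ℂ} {s : Word}
    (h : ∀ u v, u ++ v = s → f u * g v = f' u * g' v) : conv f g s = conv f' g' s :=
  Finset.sum_congr rfl fun i _ => h _ _ (List.take_append_drop i s)

theorem conv_eq_zero {f g : Word → ℂ} {s : Word} (h : ∀ u v, u ++ v = s → f u * g v = 0) :
    conv f g s = 0 :=
  Finset.sum_eq_zero fun i _ => h _ _ (List.take_append_drop i s)

theorem conv_replicate (f g : Word → ℂ) (a : ℕ) (x : Letter) :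
    conv f g (List.replicate a x) =
      ∑ c ∈ Finset.range (a + 1), f (List.replicate c x) * g (List.replicate (a - c) x) := by
  rw [conv, List.length_replicate]
  refine Finset.sum_congr rfl fun c hc => ?_
  rw [List.take_replicate, List.drop_replicate,
    min_eq_left (Nat.lt_succ_iff.mp (Finset.mem_range.mp hc))]

theorem conv_add_left (f f' g : Word → ℂ) (s : Word) :
    conv (fun t => f t + f' t) g s = conv f g s + conv f' g s := by
  simp only [conv, add_mul, Finset.sum_add_distrib]

theorem conv_const_mul_left (c : ℂ) (f g : Word → ℂ) (s : Word) :
    conv (fun t => c * f t) g s = c * conv f g s := by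
  simp only [conv, mul_assoc, Finset.mul_sum]

theorem conv_mul_const_left (c : ℂ) (f g : Word → ℂ) (s : Word) :
    conv (fun t => f t * c) g s = conv f g s * c := by
  simp only [conv, mul_right_comm, Finset.sum_mul]

theorem conv_mul_const_right (c : ℂ) (f g : Word → ℂ) (s : Word) :
    conv f (fun t => g t * c) s = conv f g s * c := by
  simp only [conv, ← mul_assoc, Finset.sum_mul]

theorem conv_assoc (f g h : Word → ℂ) : conv (conv f g) h = conv f (conv g h) := by
  funext s
  induction s generalizing f with
  | nil => simp [conv_nil, mul_assoc]
  | cons x s ih =>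
    simp only [conv_cons, conv_nil, conv_add_left, conv_const_mul_left, ih]
    ring

theorem conv_append_cons (f g : Word → ℂ) (r : Word) (x : Letter) (t : Word) :
    conv f g (r ++ x :: t) =
      conv f (fun y => g (y ++ x :: t)) r + conv (fun y => f (r ++ x :: y)) g t := by
  induction r generalizing f with
  | nil => simp [conv_cons, conv_nil]
  | cons a r ih => simp [conv_cons, ih, add_assoc]

theorem conv_single_nil (f : Word → ℂ) : conv f (Pi.single [] 1) = f := by
  funext s
  induction s generalizing f with
  | nil => simp [conv_nil]
  | cons x s ih => simp [conv_cons, ih]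

theorem single_nil_conv (f : Word → ℂ) : conv (Pi.single [] 1) f = f := by
  funext s
  cases s with
  | nil => simp [conv_nil]
  | cons x s => rw [conv_cons]; simp [conv]

theorem single_singleton_conv_cons (x : Letter) (f : Word → ℂ) (y : Letter) (s : Word) :
    conv (Pi.single [x] 1) f (y :: s) = if y = x then f s else 0 := by
  have h : (fun t => (Pi.single [x] 1 : Word → ℂ) (y :: t)) =
      fun t => (if y = x then 1 else 0) * (Pi.single [] 1 : Word → ℂ) t := by
    funext t
    by_cases hy : y = x <;> simp [Pi.single_apply, hy]
  rw [conv_cons, h, conv_const_mul_left, single_nil_conv]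
  simp

theorem conv_conv_swap (Φ : Word → Word → ℂ) (g h : Word → ℂ) (r t : Word) :
    conv (fun x => conv (Φ x) g t) h r = conv (fun y => conv (fun x => Φ x y) h r) g t := by
  simp only [conv, Finset.sum_mul]
  rw [Finset.sum_comm]
  exact Finset.sum_congr rfl fun i _ => Finset.sum_congr rfl fun j _ => by ring

end Convolution

section StarComposition

/-- Accumulator for `starComp`: reads a word letter by letter, keeping in the second argument the
current run of `z`s, which is split by a convolution with `g` as soon as the next `w` is met. -/
noncomputable def starCompRun (g : Word → ℂ) : Word → Word → (Word → ℂ) → ℂ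
  | [], r, f => f r
  | Letter.z :: s, r, f => starCompRun g s (r ++ [Letter.z]) f
  | Letter.w :: s, r, f => conv (fun x => starCompRun g s [] fun y => f (x ++ Letter.w :: y)) g r

/-- The composition `f_{⋆g}`, that is, the result of substituting `g ⋆ w` for `w` in `f`. Every
single `w` is treated as a `w`-block of its own, which makes no difference when `g(1) = 1`. -/
noncomputable def starComp (f g : Word → ℂ) (s : Word) : ℂ :=
  starCompRun g s [] f

variable {r t : Word} (f g h : Word → ℂ)

theorem starCompRun_append (hr : Letter.w ∉ r) (s q : Word) :
    starCompRun g (r ++ s) q f = starCompRun g s (q ++ r) f := by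
  induction r generalizing q with
  | nil => simp
  | cons x r ih =>
    cases x with
    | z => simpa [starCompRun] using ih (by simpa using hr) (q ++ [Letter.z])
    | w => simp at hr

theorem starComp_of_w_notMem (hr : Letter.w ∉ r) : starComp f g r = f r := by
  simpa [starComp, starCompRun] using starCompRun_append f g hr [] []

theorem starComp_append_w (hr : Letter.w ∉ r) (t : Word) :
    starComp f g (r ++ Letter.w :: t) =
      conv (fun x => starComp (fun y => f (x ++ Letter.w :: y)) g t) g r := by
  simp [starComp, starCompRun_append f g hr, starCompRun]

theorem starComp_congr_left {f f' : Word → ℂ} (g : Word → ℂ) {s : Word}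
    (hf : ∀ t, t.length ≤ s.length → f t = f' t) : starComp f g s = starComp f' g s := by
  induction s using run_induction generalizing f f' with
  | run r hr => rw [starComp_of_w_notMem _ _ hr, starComp_of_w_notMem _ _ hr, hf r le_rfl]
  | run_append_w r t hr ih =>
    rw [starComp_append_w _ _ hr, starComp_append_w _ _ hr]
    refine conv_congr fun u v huv => ?_
    rw [ih fun y hy => hf _ ?_]
    simp only [← huv, List.length_append, List.length_cons]
    omega

theorem starComp_congr_right {g g' : Word → ℂ} (hg : ∀ r, Letter.w ∉ r → g r = g' r) :
    starComp f g = starComp f g' := by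
  funext s
  induction s using run_induction generalizing f with
  | run r hr => rw [starComp_of_w_notMem _ _ hr, starComp_of_w_notMem _ _ hr]
  | run_append_w r t hr ih =>
    rw [starComp_append_w _ _ hr, starComp_append_w _ _ hr]
    refine conv_congr fun u v huv => ?_
    rw [ih, hg v fun hv => hr (huv ▸ List.mem_append_right u hv)]

theorem starComp_add (f f' g : Word → ℂ) :
    starComp (fun t => f t + f' t) g = fun t => starComp f g t + starComp f' g t := by
  funext s
  induction s using run_induction generalizing f f' with
  | run r hr => simp only [starComp_of_w_notMem _ _ hr]
  | run_append_w r t hr ih => simp only [starComp_append_w _ _ hr, ih, conv_add_left]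

theorem starComp_sum_mul {ι : Type*} (I : Finset ι) (c : ι → ℂ) (f : ι → Word → ℂ) (s : Word) :
    starComp (fun t => ∑ i ∈ I, c i * f i t) g s = ∑ i ∈ I, c i * starComp (f i) g s := by
  induction s using run_induction generalizing f with
  | run r hr => simp only [starComp_of_w_notMem _ _ hr]
  | run_append_w r t hr ih =>
    simp only [starComp_append_w _ _ hr, ih, conv, Finset.sum_mul, Finset.mul_sum]
    rw [Finset.sum_comm]
    simp only [mul_assoc]

theorem starComp_conv_left (H : Word → Word → ℂ) (r t : Word) :
    starComp (fun y => conv (fun x => H x y) h r) g t =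
      conv (fun x => starComp (H x) g t) h r := by
  simp only [conv, mul_comm _ (h _), starComp_sum_mul]

theorem starComp_conv_right (H : Word → Word → ℂ) (r t : Word) :
    starComp (fun y => conv f (fun x => H x y) r) g t =
      conv f (fun x => starComp (H x) g t) r := by
  simp only [conv, starComp_sum_mul]

theorem starComp_conv : starComp (conv f h) g = conv (starComp f g) (starComp h g) := by
  funext s
  induction s using run_induction generalizing f with
  | run r hr =>
    rw [starComp_of_w_notMem _ _ hr]
    refine conv_congr fun u v huv => ?_
    have huv' : Letter.w ∉ u ∧ Letter.w ∉ v := by simpa [← huv] using hr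
    rw [starComp_of_w_notMem _ _ huv'.1, starComp_of_w_notMem _ _ huv'.2]
  | run_append_w r t hr ih =>
    simp only [starComp_append_w _ _ hr, conv_append_cons, starComp_add, starComp_conv_right, ih,
      conv_add_left]
    rw [conv_conv_swap]
    congr 1
    rw [conv_assoc]
    refine conv_congr fun u v huv => ?_
    have huv' : Letter.w ∉ u ∧ Letter.w ∉ v := by simpa [← huv] using hr
    rw [starComp_of_w_notMem _ _ huv'.1, starComp_append_w _ _ huv'.2]

theorem starComp_starComp : starComp (starComp f g) h = starComp f (conv g h) := by
  funext s
  induction s using run_induction generalizing f with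
  | run r hr => simp only [starComp_of_w_notMem _ _ hr]
  | run_append_w r t hr ih =>
    rw [starComp_append_w _ _ hr, starComp_append_w _ _ hr, ← conv_assoc]
    refine conv_congr fun u v huv => ?_
    have hu : Letter.w ∉ u := fun hu => hr (huv ▸ List.mem_append_left v hu)
    simp only [starComp_append_w _ _ hu, starComp_conv_left, ih]

theorem starComp_single_nil : starComp f (Pi.single [] 1) = f := by
  funext s
  induction s using run_induction generalizing f with
  | run r hr => rw [starComp_of_w_notMem _ _ hr]
  | run_append_w r t hr ih => simp only [starComp_append_w _ _ hr, conv_single_nil, ih]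

theorem starComp_const_mul (c : ℂ) :
    starComp (fun t => c * f t) g = fun t => c * starComp f g t := by
  funext s
  simpa using starComp_sum_mul g {()} (fun _ => c) (fun _ => f) s

theorem starComp_eq_self {f : Word → ℂ} (hf : ∀ s, Letter.w ∈ s → f s = 0) :
    starComp f g = f := by
  funext s
  induction s using run_induction with
  | run r hr => rw [starComp_of_w_notMem _ _ hr]
  | run_append_w r t hr =>
    have hzero : starComp (fun _ => 0) g t = 0 := by
      simpa using congrFun (starComp_const_mul 0 g 0) t
    rw [starComp_append_w _ _ hr, hf _ (by simp)]
    exact conv_eq_zero fun u v _ => by simp [hf, hzero]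

theorem starComp_single_w {g : Word → ℂ} (hg : ∀ s, Letter.w ∈ s → g s = 0) :
    starComp (Pi.single [Letter.w] 1) g = conv g (Pi.single [Letter.w] 1) := by
  have hδ : starComp (Pi.single [] 1) g = Pi.single [] 1 :=
    starComp_eq_self g fun s hs => Pi.single_eq_of_ne (List.ne_nil_of_mem hs) _
  have hsingle (x y : Word) : (Pi.single [Letter.w] 1 : Word → ℂ) (x ++ Letter.w :: y) =
      (Pi.single [] 1 : Word → ℂ) x * (Pi.single [] 1 : Word → ℂ) y := by
    cases x <;> cases y <;> simp
  have hw {s : Word} (hs : s ≠ [Letter.w]) : (Pi.single [Letter.w] 1 : Word → ℂ) s = 0 :=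
    Pi.single_eq_of_ne hs _
  funext s
  induction s using run_induction with
  | run r hr =>
    rw [starComp_of_w_notMem _ _ hr, hw (by rintro rfl; simp at hr)]
    refine (conv_eq_zero fun u v huv => ?_).symm
    rw [hw (by rintro rfl; simp [← huv] at hr), mul_zero]
  | run_append_w r t hr =>
    have htail : conv (fun y => g (r ++ Letter.w :: y)) (Pi.single [Letter.w] 1) t = 0 :=
      conv_eq_zero fun u v _ => by rw [hg _ (by simp), zero_mul]
    simp only [starComp_append_w _ _ hr, conv_append_cons, htail, hsingle, starComp_const_mul, hδ,
      add_zero]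
    rw [conv_mul_const_left, conv_mul_const_right, single_nil_conv, conv_single_nil]

theorem exists_eq_replicate_w_append (s : Word) :
    ∃ k r, s = List.replicate k Letter.w ++ r ∧ r.head? ≠ some Letter.w := by
  induction s with
  | nil => exact ⟨0, [], rfl, by simp⟩
  | cons x s ih =>
    cases x with
    | z => exact ⟨0, Letter.z :: s, rfl, by simp⟩
    | w =>
      obtain ⟨k, r, rfl, hr⟩ := ih
      exact ⟨k + 1, r, rfl, hr⟩

theorem IsStarAux.append_w {f g : Word → ℂ} {G : Word → Word → ℂ} (hG : IsStarAux f g G)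
    (hg : g [] = 1) (pre : Word) {r : Word} (hr : Letter.w ∉ r) (t : Word) :
    G pre (r ++ Letter.w :: t) = conv (fun x => G (pre ++ x ++ [Letter.w]) t) g r := by
  obtain ⟨k, t, rfl, ht⟩ := exists_eq_replicate_w_append t
  have hrun (pre : Word) : G pre (List.replicate k Letter.w ++ t) =
      G (pre ++ List.replicate k Letter.w) t := by
    rcases Nat.eq_zero_or_pos k with rfl | hk
    · simp
    · simpa [hg] using hG.2 pre 0 k t hk ht
  rw [eq_replicate_of_w_notMem hr, conv_replicate]
  have hfirst := hG.2 pre r.length (k + 1) t (by omega) ht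
  simpa [hrun, List.replicate_succ, mul_comm] using hfirst

theorem IsStarAux.eq_starComp {f g : Word → ℂ} {G : Word → Word → ℂ} (hG : IsStarAux f g G)
    (hg : g [] = 1) (pre s : Word) : G pre s = starComp (fun t => f (pre ++ t)) g s := by
  induction s using run_induction generalizing pre with
  | run r hr => rw [hG.1 pre r hr, starComp_of_w_notMem _ _ hr]
  | run_append_w r t hr ih => simp [hG.append_w hg pre hr, starComp_append_w _ _ hr, ih]

end StarComposition

section Norm

variable {V : Word → ℝ}

theorem normW_le_normW {V' : Word → ℝ} {f g : Word → ℂ} (h : ∀ s, V s * ‖f s‖ ≤ V' s * ‖g s‖) :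
    normW V f ≤ normW V' g :=
  ENNReal.tsum_le_tsum fun s => ENNReal.ofReal_le_ofReal (h s)

theorem normW_add_le (hV : ∀ s, 0 ≤ V s) (f g : Word → ℂ) :
    normW V (fun s => f s + g s) ≤ normW V f + normW V g := by
  rw [normW, normW, normW, ← ENNReal.tsum_add]
  refine ENNReal.tsum_le_tsum fun s => ?_
  rw [← ENNReal.ofReal_add (mul_nonneg (hV s) (norm_nonneg _)) (mul_nonneg (hV s) (norm_nonneg _)),
    ← mul_add]
  exact ENNReal.ofReal_le_ofReal (mul_le_mul_of_nonneg_left (norm_add_le _ _) (hV s))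

theorem normW_const_mul_weight {c : ℝ} (hc : 0 ≤ c) (V : Word → ℝ) (f : Word → ℂ) :
    normW (fun s => c * V s) f = ENNReal.ofReal c * normW V f := by
  simp only [normW, mul_assoc, ENNReal.ofReal_mul hc, ENNReal.tsum_mul_left]

theorem normW_single (V : Word → ℝ) (s : Word) :
    normW V (Pi.single s 1) = ENNReal.ofReal (V s) := by
  rw [normW, tsum_eq_single s fun t ht => by simp [Pi.single_eq_of_ne ht]]
  simp

theorem normW_single_singleton_conv (V : Word → ℝ) (x : Letter) (f : Word → ℂ) :
    normW V (conv (Pi.single [x] 1) f) = normW (fun t => V (x :: t)) f := by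
  have hsupp : (Function.support fun s =>
      ENNReal.ofReal (V s * ‖conv (Pi.single [x] 1) f s‖)) ⊆ Set.range (List.cons x) := by
    refine Function.support_subset_iff'.2 fun s hs => ?_
    cases s with
    | nil => simp [conv_nil]
    | cons y s =>
      have hy : y ≠ x := by
        rintro rfl
        exact hs ⟨s, rfl⟩
      simp [single_singleton_conv_cons, hy]
  rw [normW, ← List.cons_injective.tsum_eq hsupp]
  simp [normW, single_singleton_conv_cons]

theorem normW_lt_top_of_finite_support {f : Word → ℂ} (hf : f.support.Finite) :
    normW V f < ⊤ := by
  rw [normW, tsum_eq_sum (s := hf.toFinset) fun s hs => by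
    simp [Function.notMem_support.1 (mt hf.mem_toFinset.2 hs)]]
  exact ENNReal.sum_lt_top.2 fun s _ => ENNReal.ofReal_lt_top

/-- Words with a marked cutting position correspond to pairs of words. -/
def splitEquiv : (Σ s : Word, Fin (s.length + 1)) ≃ Word × Word where
  toFun x := (x.1.take x.2, x.1.drop x.2)
  invFun p := ⟨p.1 ++ p.2, ⟨p.1.length, by simp⟩⟩
  left_inv := by
    rintro ⟨s, i⟩
    have hs : s.take i ++ s.drop i = s := List.take_append_drop _ _
    have hi : (s.take i).length = i := by simp; omega
    refine Sigma.ext hs ?_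
    exact (Fin.heq_ext_iff (congrArg (fun t : Word => t.length + 1) hs)).2 hi
  right_inv := by
    rintro ⟨u, v⟩
    simp

theorem tsum_sum_take_drop (F : Word → Word → ℝ≥0∞) :
    ∑' s : Word, ∑ i ∈ Finset.range (s.length + 1), F (s.take i) (s.drop i) =
      ∑' u, ∑' v, F u v := by
  rw [← ENNReal.tsum_prod, ← splitEquiv.tsum_eq, ENNReal.tsum_sigma']
  refine tsum_congr fun s => ?_
  rw [tsum_fintype, Finset.sum_range]
  rfl

theorem normW_conv_le {V₁ V₂ : Word → ℝ} (hV : ∀ s, 0 ≤ V s) (hV₁ : ∀ s, 0 ≤ V₁ s)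
    (hmul : ∀ s t, V (s ++ t) ≤ V₁ s * V₂ t) (f g : Word → ℂ) :
    normW V (conv f g) ≤ normW V₁ f * normW V₂ g := by
  have hterm (u v : Word) : V (u ++ v) * ‖f u * g v‖ ≤ V₁ u * ‖f u‖ * (V₂ v * ‖g v‖) := by
    calc V (u ++ v) * ‖f u * g v‖ ≤ V₁ u * V₂ v * ‖f u * g v‖ :=
          mul_le_mul_of_nonneg_right (hmul u v) (norm_nonneg _)
      _ = V₁ u * ‖f u‖ * (V₂ v * ‖g v‖) := by rw [norm_mul]; ring
  have hword (s : Word) : ENNReal.ofReal (V s * ‖conv f g s‖) ≤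
      ∑ i ∈ Finset.range (s.length + 1), ENNReal.ofReal (V₁ (s.take i) * ‖f (s.take i)‖) *
        ENNReal.ofReal (V₂ (s.drop i) * ‖g (s.drop i)‖) := by
    calc ENNReal.ofReal (V s * ‖conv f g s‖)
        ≤ ENNReal.ofReal (∑ i ∈ Finset.range (s.length + 1),
            V s * ‖f (s.take i) * g (s.drop i)‖) := by
          rw [← Finset.mul_sum]
          exact ENNReal.ofReal_le_ofReal (mul_le_mul_of_nonneg_left (norm_sum_le _ _) (hV s))
      _ = ∑ i ∈ Finset.range (s.length + 1),
            ENNReal.ofReal (V s * ‖f (s.take i) * g (s.drop i)‖) :=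
          ENNReal.ofReal_sum_of_nonneg fun i _ => mul_nonneg (hV s) (norm_nonneg _)
      _ ≤ _ := Finset.sum_le_sum fun i _ => by
          rw [← ENNReal.ofReal_mul (mul_nonneg (hV₁ _) (norm_nonneg _))]
          simpa using ENNReal.ofReal_le_ofReal (hterm (s.take i) (s.drop i))
  calc normW V (conv f g) ≤ ∑' s : Word, _ := ENNReal.tsum_le_tsum hword
    _ = ∑' u, ∑' v, ENNReal.ofReal (V₁ u * ‖f u‖) * ENNReal.ofReal (V₂ v * ‖g v‖) :=
        tsum_sum_take_drop fun u v =>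
          ENNReal.ofReal (V₁ u * ‖f u‖) * ENNReal.ofReal (V₂ v * ‖g v‖)
    _ = normW V₁ f * normW V₂ g := by
        simp only [ENNReal.tsum_mul_left, ENNReal.tsum_mul_right, normW]

theorem eq_single_nil_add_conv_of_conv_eq {f g : Word → ℂ} (hfg : conv f g = Pi.single [] 1) :
    g = fun s => (Pi.single [] 1 : Word → ℂ) s + conv (Pi.single [] 1 - f) g s := by
  have hsub : (Pi.single [] 1 - f : Word → ℂ) =
      fun t => (Pi.single [] 1 : Word → ℂ) t + -1 * f t := by
    funext t
    simp [sub_eq_add_neg]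
  funext s
  rw [hsub, conv_add_left, conv_const_mul_left, single_nil_conv, hfg]
  ring

theorem normW_eq_one_add (hV1 : V [] = 1) {f : Word → ℂ} (hf : f [] = 1) :
    normW V f = 1 + normW V (Pi.single [] 1 - f) := by
  have hδ : normW V (Pi.single [] 1) = 1 := by rw [normW_single, hV1, ENNReal.ofReal_one]
  rw [← hδ, normW, normW, normW, ← ENNReal.tsum_add]
  refine tsum_congr fun s => ?_
  cases s <;> simp [hf]

theorem le_inv_one_sub_of_le_one_add_mul {x r : ℝ≥0∞} (hx : x ≠ ⊤) (h : x ≤ 1 + r * x) :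
    x ≤ (1 - r)⁻¹ := by
  rw [ENNReal.le_inv_iff_mul_le, ENNReal.mul_sub fun _ _ => hx, mul_one, mul_comm x]
  exact tsub_le_iff_right.2 h

theorem norm_indicator_length_le {f g : Word → ℂ} (hfg : conv f g = Pi.single [] 1) (N : ℕ)
    (s : Word) :
    ‖Set.indicator {t | t.length ≤ N} g s‖ ≤ ‖(Pi.single [] 1 : Word → ℂ) s +
      conv (Pi.single [] 1 - f) (Set.indicator {t | t.length ≤ N} g) s‖ := by
  by_cases hs : s.length ≤ N
  · have hconv : conv (Pi.single [] 1 - f) g s =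
        conv (Pi.single [] 1 - f) (Set.indicator {t | t.length ≤ N} g) s :=
      conv_congr fun u v huv => by
        have hv : v.length ≤ N := (by simp [← huv] : v.length ≤ s.length).trans hs
        simp [hv]
    rw [← hconv, ← congrFun (eq_single_nil_add_conv_of_conv_eq hfg) s]
    simp [hs]
  · simp [hs]

-- Summing `g = δ + (δ - f) ⋆ g` as a geometric series presupposes that `g` has finite norm, hence
-- the truncations to words of bounded length.
theorem normW_inverse_le (hV : ∀ s, 0 ≤ V s) (hmul : ∀ s t, V (s ++ t) ≤ V s * V t)
    (hV1 : V [] = 1) {f g : Word → ℂ} (hf : f [] = 1) (hfg : conv f g = Pi.single [] 1) :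
    normW V g ≤ (2 - normW V f)⁻¹ := by
  let trunc (N : ℕ) : Word → ℂ := Set.indicator {s | s.length ≤ N} g
  have htrunc_ne_top (N : ℕ) : normW V (trunc N) ≠ ⊤ :=
    (normW_lt_top_of_finite_support <| (List.finite_length_le Letter N).subset
      Set.support_indicator_subset).ne
  have htrunc_le (N : ℕ) :
      normW V (trunc N) ≤ 1 + normW V (Pi.single [] 1 - f) * normW V (trunc N) := by
    calc normW V (trunc N)
        ≤ normW V (fun s => (Pi.single [] 1 : Word → ℂ) s +
            conv (Pi.single [] 1 - f) (trunc N) s) :=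
          normW_le_normW fun s =>
            mul_le_mul_of_nonneg_left (norm_indicator_length_le hfg N s) (hV s)
      _ ≤ normW V (Pi.single [] 1) + normW V (conv (Pi.single [] 1 - f) (trunc N)) :=
          normW_add_le hV _ _
      _ ≤ 1 + normW V (Pi.single [] 1 - f) * normW V (trunc N) := by
          rw [normW_single, hV1, ENNReal.ofReal_one]
          gcongr
          exact normW_conv_le hV hV hmul _ _
  have hinv (N : ℕ) : normW V (trunc N) ≤ (2 - normW V f)⁻¹ := by
    rw [normW_eq_one_add hV1 hf, ← one_add_one_eq_two,
      ENNReal.add_sub_add_eq_sub_left ENNReal.one_ne_top]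
    exact le_inv_one_sub_of_le_one_add_mul (htrunc_ne_top N) (htrunc_le N)
  refine ENNReal.summable.tsum_le_of_sum_le fun I => ?_
  refine le_trans ?_ (hinv (I.sup List.length))
  refine le_trans (Finset.sum_le_sum fun s hs => ?_) (ENNReal.sum_le_tsum I)
  simp [trunc, Finset.le_sup (f := List.length) hs]

theorem inv_two_sub_le_ofReal {Q : ℝ} (hQ : 0 < Q) {x : ℝ≥0∞}
    (hx : x < ENNReal.ofReal (2 - 1 / Q)) : (2 - x)⁻¹ ≤ ENNReal.ofReal Q := by
  have hpos : 0 < 2 - 1 / Q := ENNReal.ofReal_pos.1 (bot_le.trans_lt hx)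
  rw [ENNReal.inv_le_iff_inv_le, ← ENNReal.ofReal_inv_of_pos hQ]
  refine ENNReal.le_sub_of_add_le_left hx.ne_top ?_
  calc x + ENNReal.ofReal Q⁻¹ ≤ ENNReal.ofReal (2 - 1 / Q) + ENNReal.ofReal Q⁻¹ := by gcongr
    _ = ENNReal.ofReal (2 - 1 / Q + Q⁻¹) := (ENNReal.ofReal_add hpos.le (by positivity)).symm
    _ = 2 := by simp

/-- The weight `W̃(s) = W(s) Q^{-m(s)}`, where `m(s)` is the number of occurrences of `w`. -/
noncomputable def twistWeight (W : Word → ℝ) (Q : ℝ) (s : Word) : ℝ :=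
  W s * (Q ^ s.count Letter.w)⁻¹

variable {W : Word → ℝ} {Q : ℝ}

theorem twistWeight_nonneg (hW : ∀ s, 0 ≤ W s) (hQ : 0 ≤ Q) (s : Word) :
    0 ≤ twistWeight W Q s :=
  mul_nonneg (hW s) (by positivity)

theorem twistWeight_append_le {W₁ W₂ : Word → ℝ} (hQ : 0 ≤ Q) {s t : Word}
    (hmul : W (s ++ t) ≤ W₁ s * W₂ t) :
    twistWeight W Q (s ++ t) ≤ twistWeight W₁ Q s * twistWeight W₂ Q t := by
  rw [twistWeight, List.count_append, pow_add, mul_inv]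
  calc W (s ++ t) * ((Q ^ s.count Letter.w)⁻¹ * (Q ^ t.count Letter.w)⁻¹)
      ≤ W₁ s * W₂ t * ((Q ^ s.count Letter.w)⁻¹ * (Q ^ t.count Letter.w)⁻¹) :=
        mul_le_mul_of_nonneg_right hmul (by positivity)
    _ = twistWeight W₁ Q s * twistWeight W₂ Q t := by simp only [twistWeight]; ring

theorem normW_twistWeight_eq (W : Word → ℝ) (Q : ℝ) {f : Word → ℂ}
    (hf : ∀ s, Letter.w ∈ s → f s = 0) : normW (twistWeight W Q) f = normW W f := by
  refine tsum_congr fun s => ?_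
  by_cases hs : Letter.w ∈ s
  · simp [hf s hs]
  · simp [twistWeight, List.count_eq_zero.2 hs]

theorem normW_twistWeight_single_z_conv (W : Word → ℝ) (Q : ℝ) (f : Word → ℂ) :
    normW (twistWeight W Q) (conv (Pi.single [Letter.z] 1) f) =
      normW (twistWeight (fun t => W (Letter.z :: t)) Q) f := by
  rw [normW_single_singleton_conv]
  simp [twistWeight, normW]

theorem normW_twistWeight_single_w_conv (hQ : 0 ≤ Q) (W : Word → ℝ) (f : Word → ℂ) :
    normW (twistWeight W Q) (conv (Pi.single [Letter.w] 1) f) =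
      ENNReal.ofReal Q⁻¹ * normW (twistWeight (fun t => W (Letter.w :: t)) Q) f := by
  rw [normW_single_singleton_conv, ← normW_const_mul_weight (inv_nonneg.2 hQ)]
  congr 1
  funext t
  simp only [twistWeight, List.count_cons_self, pow_succ, mul_inv]
  ring

variable {g : Word → ℂ}

-- The trace property moves the factor `g`, inserted after the prefix `p`, to the front of the word.
theorem normW_conv_single_w_conv_le (hW : ∀ s, 0 ≤ W s) (hWmul : ∀ s t, W (s ++ t) ≤ W s * W t)
    (hWcomm : ∀ s t, W (s ++ t) = W (t ++ s)) (hQ : 0 < Q)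
    (hg : ∀ s, Letter.w ∈ s → g s = 0) (hgQ : normW W g ≤ ENNReal.ofReal Q) (p : Word)
    (f : Word → ℂ) :
    normW (twistWeight (fun t => W (p ++ t)) Q) (conv g (conv (Pi.single [Letter.w] 1) f)) ≤
      normW (twistWeight (fun t => W (p ++ Letter.w :: t)) Q) f := by
  have hmove (u v : Word) : W (p ++ (u ++ v)) ≤ W u * W (p ++ v) := by
    rw [hWcomm, List.append_assoc, hWcomm p v]
    exact hWmul u (v ++ p)
  calc normW (twistWeight (fun t => W (p ++ t)) Q) (conv g (conv (Pi.single [Letter.w] 1) f))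
      ≤ normW (twistWeight W Q) g *
          normW (twistWeight (fun t => W (p ++ t)) Q) (conv (Pi.single [Letter.w] 1) f) :=
        normW_conv_le (twistWeight_nonneg (fun _ => hW _) hQ.le) (twistWeight_nonneg hW hQ.le)
          (fun u v => twistWeight_append_le (W := fun t => W (p ++ t))
            (W₂ := fun t => W (p ++ t)) hQ.le (hmove u v)) _ _
    _ ≤ ENNReal.ofReal Q *
          (ENNReal.ofReal Q⁻¹ * normW (twistWeight (fun t => W (p ++ Letter.w :: t)) Q) f) := by
        rw [normW_twistWeight_eq W Q hg, normW_twistWeight_single_w_conv hQ.le]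
        gcongr
    _ = normW (twistWeight (fun t => W (p ++ Letter.w :: t)) Q) f := by
        rw [← mul_assoc, ← ENNReal.ofReal_mul hQ.le, mul_inv_cancel₀ hQ.ne', ENNReal.ofReal_one,
          one_mul]

theorem normW_starComp_single_le (hW : ∀ s, 0 ≤ W s) (hWmul : ∀ s t, W (s ++ t) ≤ W s * W t)
    (hWcomm : ∀ s t, W (s ++ t) = W (t ++ s)) (hQ : 0 < Q)
    (hg : ∀ s, Letter.w ∈ s → g s = 0) (hgQ : normW W g ≤ ENNReal.ofReal Q) (p s : Word) :
    normW (twistWeight (fun t => W (p ++ t)) Q) (starComp (Pi.single s 1) g) ≤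
      ENNReal.ofReal (W (p ++ s)) := by
  have hfree (s : Word) (hs : Letter.w ∉ s) : starComp (Pi.single s 1) g = Pi.single s 1 :=
    starComp_eq_self g fun t ht => Pi.single_eq_of_ne (ne_of_mem_of_not_mem' ht hs) _
  induction s generalizing p with
  | nil =>
    rw [hfree _ List.not_mem_nil, normW_single]
    simp [twistWeight]
  | cons x s ih =>
    have hcons : (Pi.single (x :: s) 1 : Word → ℂ) = conv (Pi.single [x] 1) (Pi.single s 1) := by
      funext t
      cases t <;> simp [conv_nil, single_singleton_conv_cons, Pi.single_apply, ite_and]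
    rw [hcons, starComp_conv]
    cases x with
    | z =>
      rw [hfree _ (by simp), normW_twistWeight_single_z_conv]
      simpa using ih (p ++ [Letter.z])
    | w =>
      rw [starComp_single_w hg, conv_assoc]
      refine (normW_conv_single_w_conv_le hW hWmul hWcomm hQ hg hgQ p _).trans ?_
      simpa using ih (p ++ [Letter.w])

theorem starComp_eq_sum (f g : Word → ℂ) (t : Word) :
    starComp f g t = ∑ s ∈ (List.finite_length_le Letter t.length).toFinset,
      f s * starComp (Pi.single s 1) g t := by
  rw [← starComp_sum_mul]
  refine starComp_congr_left g fun u hu => ?_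
  simp [Pi.single_apply, hu]

theorem normW_starComp_le_of_single_le {V' : Word → ℝ} (hV : ∀ s, 0 ≤ V s)
    (hg : ∀ s, normW V (starComp (Pi.single s 1) g) ≤ ENNReal.ofReal (V' s)) (f : Word → ℂ) :
    normW V (starComp f g) ≤ normW V' f := by
  have hterm (t : Word) : ENNReal.ofReal (V t * ‖starComp f g t‖) ≤
      ∑' s, ENNReal.ofReal ‖f s‖ * ENNReal.ofReal (V t * ‖starComp (Pi.single s 1) g t‖) := by
    set I := (List.finite_length_le Letter t.length).toFinset
    calc ENNReal.ofReal (V t * ‖starComp f g t‖)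
        ≤ ENNReal.ofReal (∑ s ∈ I, ‖f s‖ * (V t * ‖starComp (Pi.single s 1) g t‖)) := by
          refine ENNReal.ofReal_le_ofReal ?_
          rw [starComp_eq_sum f g t]
          refine (mul_le_mul_of_nonneg_left (norm_sum_le _ _) (hV t)).trans_eq ?_
          simp only [norm_mul, Finset.mul_sum, mul_left_comm, I]
      _ = ∑ s ∈ I, ENNReal.ofReal ‖f s‖ *
            ENNReal.ofReal (V t * ‖starComp (Pi.single s 1) g t‖) := by
          rw [ENNReal.ofReal_sum_of_nonneg fun s _ => mul_nonneg (norm_nonneg _)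
            (mul_nonneg (hV t) (norm_nonneg _))]
          simp only [ENNReal.ofReal_mul (norm_nonneg (f _))]
      _ ≤ _ := ENNReal.sum_le_tsum I
  calc normW V (starComp f g) ≤ ∑' t, ∑' s, ENNReal.ofReal ‖f s‖ *
          ENNReal.ofReal (V t * ‖starComp (Pi.single s 1) g t‖) := ENNReal.tsum_le_tsum hterm
    _ = ∑' s, ENNReal.ofReal ‖f s‖ * normW V (starComp (Pi.single s 1) g) := by
        rw [ENNReal.tsum_comm]
        simp only [ENNReal.tsum_mul_left, normW]
    _ ≤ normW V' f := ENNReal.tsum_le_tsum fun s => by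
        rw [mul_comm (V' s), ENNReal.ofReal_mul (norm_nonneg _)]
        gcongr
        exact hg s

theorem normW_starComp_le (hW : ∀ s, 0 ≤ W s) (hWmul : ∀ s t, W (s ++ t) ≤ W s * W t)
    (hWcomm : ∀ s t, W (s ++ t) = W (t ++ s)) (hQ : 0 < Q)
    (hg : ∀ s, Letter.w ∈ s → g s = 0) (hgQ : normW W g ≤ ENNReal.ofReal Q) (f : Word → ℂ) :
    normW (twistWeight W Q) (starComp f g) ≤ normW W f :=
  normW_starComp_le_of_single_le (twistWeight_nonneg hW hQ.le)
    (normW_starComp_single_le hW hWmul hWcomm hQ hg hgQ []) f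

end Norm

section AdmissiblePartitions

variable {s : Word} {g : Finset ℕ} {P : Finset (Finset ℕ)}

theorem IsPartitionOn.subset (hP : IsPartitionOn g P) {b : Finset ℕ} (hb : b ∈ P) : b ⊆ g :=
  hP.2.2 ▸ Finset.le_sup (f := id) hb

theorem IsPartitionOn.exists_mem (hP : IsPartitionOn g P) {i : ℕ} (hi : i ∈ g) :
    ∃ b ∈ P, i ∈ b := by
  rwa [← hP.2.2, Finset.mem_sup] at hi

theorem mem_APfin : P ∈ APfin s g ↔ IsPartitionOn g P ∧ Admissible s P := by
  simp only [APfin, Finset.mem_filter, Finset.mem_powerset, and_iff_right_iff_imp]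
  exact fun h b hb => Finset.mem_powerset.2 (h.1.subset hb)

theorem APfin_empty (s : Word) : APfin s ∅ = {∅} := by
  ext P
  rw [mem_APfin, Finset.mem_singleton]
  constructor
  · rintro ⟨hP, -⟩
    refine Finset.eq_empty_of_forall_notMem fun b hb => (hP.1 b hb).ne_empty ?_
    exact Finset.subset_empty.1 (hP.subset hb)
  · rintro rfl
    exact ⟨⟨by simp, by simp, rfl⟩, by simp [Admissible]⟩

theorem isPartitionOn_map (e : ℕ ↪o ℕ) :
    IsPartitionOn (g.map e.toEmbedding) (P.map (Finset.mapEmbedding e.toEmbedding).toEmbedding) ↔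
      IsPartitionOn g P := by
  have hsup : (P.map (Finset.mapEmbedding e.toEmbedding).toEmbedding).sup id =
      (P.sup id).map e.toEmbedding := by
    ext i
    simp only [Finset.mem_sup, Finset.mem_map, id_eq]
    constructor
    · rintro ⟨_, ⟨b, hb, rfl⟩, hi⟩
      obtain ⟨j, hj, rfl⟩ := Finset.mem_map.1 hi
      exact ⟨j, ⟨b, hb, hj⟩, rfl⟩
    · rintro ⟨j, ⟨b, hb, hj⟩, rfl⟩
      exact ⟨_, ⟨b, hb, rfl⟩, Finset.mem_map_of_mem _ hj⟩
  simp only [IsPartitionOn, hsup, Finset.map_inj]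
  refine and_congr (by simp) (and_congr_left' ?_)
  simp [Set.PairwiseDisjoint, Set.Pairwise, Function.onFun]

theorem exists_orderEmbedding_map_range (g : Finset ℕ) :
    ∃ e : ℕ ↪o ℕ, (Finset.range g.card).map e.toEmbedding = g := by
  set a := g.orderEmbOfFin rfl
  let e (i : ℕ) : ℕ := if hi : i < g.card then a ⟨i, hi⟩ else g.sup id + 1 + i
  have he {i : ℕ} (hi : i < g.card) : e i = a ⟨i, hi⟩ := dif_pos hi
  have ha (i : Fin g.card) : a i ≤ g.sup id :=
    Finset.le_sup (f := id) (g.orderEmbOfFin_mem rfl i)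
  have hmono : StrictMono e := fun i j hij => by
    by_cases hj : j < g.card
    · rw [he hj, he (hij.trans hj)]
      exact a.strictMono hij
    · by_cases hi : i < g.card
      · have := ha ⟨i, hi⟩
        simp only [e, hi, hj, dif_pos, dif_neg, not_false_eq_true]
        omega
      · simp only [e, hi, hj, dif_neg, not_false_eq_true]
        omega
  refine ⟨OrderEmbedding.ofStrictMono e hmono, Finset.coe_injective ?_⟩
  rw [Finset.coe_map, ← g.range_orderEmbOfFin rfl]
  ext j
  constructor
  · rintro ⟨i, hi, rfl⟩
    exact ⟨⟨i, by simpa using hi⟩, (he _).symm⟩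
  · rintro ⟨i, rfl⟩
    exact ⟨i, by simp, he i.2⟩

variable {t : Word} {e : ℕ ↪o ℕ}

theorem sort_map_orderEmbedding (e : ℕ ↪o ℕ) (b : Finset ℕ) :
    (b.map e.toEmbedding).sort (· ≤ ·) = (b.sort (· ≤ ·)).map e :=
  (Finset.map_sort e.toEmbedding b _ _ fun _ _ _ _ => e.le_iff_le.symm).symm

theorem wordOf_map {b : Finset ℕ} (he : ∀ i ∈ b, letterAt s (e i) = letterAt t i) :
    wordOf s (b.map e.toEmbedding) = wordOf t b := by
  rw [wordOf, sort_map_orderEmbedding, List.map_map, wordOf]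
  exact List.map_congr_left fun i hi => he i ((Finset.mem_sort _).1 hi)

theorem admissible_map (he : ∀ i ∈ g, letterAt s (e i) = letterAt t i) (hP : ∀ b ∈ P, b ⊆ g) :
    Admissible s (P.map (Finset.mapEmbedding e.toEmbedding).toEmbedding) ↔ Admissible t P := by
  have hinner (j : ℕ) (b : Finset ℕ) : InnerPos (e j) (b.map e.toEmbedding) ↔ InnerPos j b := by
    simp [InnerPos]
  simp only [Admissible, Finset.forall_mem_map, RelEmbedding.coe_toEmbedding,
    Finset.mapEmbedding_apply, ne_eq, Finset.map_inj, hinner]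
  refine forall₂_congr fun b hb => forall₃_congr fun b' _ _ => forall₂_congr fun j hj => ?_
  rw [← he j (hP b hb hj)]

theorem APfin_map (he : ∀ i ∈ g, letterAt s (e i) = letterAt t i) :
    APfin s (g.map e.toEmbedding) = (APfin t g).map
      (Finset.mapEmbedding (Finset.mapEmbedding e.toEmbedding).toEmbedding).toEmbedding := by
  ext P
  simp only [Finset.mem_map, mem_APfin]
  constructor
  · rintro ⟨hP, hadm⟩
    have hsub : P ⊆ g.powerset.map (Finset.mapEmbedding e.toEmbedding).toEmbedding := by
      intro b hb
      obtain ⟨c, hc, rfl⟩ := Finset.subset_map_iff.1 (hP.subset hb)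
      exact Finset.mem_map.2 ⟨c, Finset.mem_powerset.2 hc, rfl⟩
    obtain ⟨R, hR, rfl⟩ := Finset.subset_map_iff.1 hsub
    exact ⟨R, ⟨(isPartitionOn_map e).1 hP, (admissible_map he fun b hb =>
      Finset.mem_powerset.1 (hR hb)).1 hadm⟩, rfl⟩
  · rintro ⟨R, ⟨hR, hadm⟩, rfl⟩
    exact ⟨(isPartitionOn_map e).2 hR, (admissible_map he fun b hb => hR.subset hb).2 hadm⟩

theorem sum_APfin_eq_moment {M L : Word → ℂ} (hM1 : M [] = 1) (hL : IsCumulants M L) (s : Word)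
    (g : Finset ℕ) : ∑ P ∈ APfin s g, ∏ b ∈ P, L (wordOf s b) = M (wordOf s g) := by
  rcases g.eq_empty_or_nonempty with rfl | hg
  · simp [APfin_empty, wordOf, hM1]
  obtain ⟨e, he⟩ := exists_orderEmbedding_map_range g
  set t := wordOf s g with ht
  have hlen : t.length = g.card := by simp [t, wordOf]
  have hsort : g.sort (· ≤ ·) = (List.range g.card).map e := by
    rw [← Finset.sort_range, ← sort_map_orderEmbedding, he]
  have hletter : ∀ i ∈ Finset.range g.card, letterAt s (e i) = letterAt t i := fun i hi => by
    rw [Finset.mem_range] at hi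
    rw [ht, wordOf, hsort]
    conv_rhs => rw [letterAt]
    simp [hi]
  have hword : ∀ P ∈ APfin t (Finset.range g.card), ∀ b ∈ P,
      wordOf s (b.map e.toEmbedding) = wordOf t b := fun P hP b hb =>
    wordOf_map fun i hi => hletter i ((mem_APfin.1 hP).1.subset hb hi)
  have hne : t ≠ [] := by simpa [← List.length_pos_iff_ne_nil, hlen] using hg
  rw [hL t hne, hlen]
  conv_lhs => rw [← he, APfin_map hletter, Finset.sum_map]
  refine Finset.sum_congr rfl fun P hP => ?_
  simp only [RelEmbedding.coe_toEmbedding, Finset.mapEmbedding_apply, Finset.prod_map]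
  exact Finset.prod_congr rfl fun b hb => by rw [hword P hP b hb]

end AdmissiblePartitions

section CutPartitions

open scoped Classical in
/-- The admissible partitions of the positions `g` of `s` for which no position in `K` is inner
with respect to a block. They arise by removing from an admissible partition a block whose letters
`w` are at the positions `K`. -/
noncomputable def cutPartitions (s : Word) (K g : Finset ℕ) : Finset (Finset (Finset ℕ)) :=
  (APfin s g).filter fun P => ∀ k ∈ K, ∀ b ∈ P, ¬ InnerPos k b

/-- The part of the moment-cumulant sum for the positions `g` of `s` that comes from
`cutPartitions s K g`. -/
noncomputable def cutSum (L : Word → ℂ) (s : Word) (K g : Finset ℕ) : ℂ :=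
  ∑ P ∈ cutPartitions s K g, ∏ b ∈ P, L (wordOf s b)

variable {s : Word} {g C D E K K' : Finset ℕ} {P R : Finset (Finset ℕ)} {k : ℕ}

theorem IsPartitionOn.of_subset (hP : IsPartitionOn g P) (hR : R ⊆ P) (hC : R.sup id = C) :
    IsPartitionOn C R :=
  ⟨fun b hb => hP.1 b (hR hb), hP.2.1.subset (Finset.coe_subset.2 hR), hC⟩

theorem IsPartitionOn.eq_of_mem (hP : IsPartitionOn g P) {b b' : Finset ℕ} (hb : b ∈ P)
    (hb' : b' ∈ P) {i : ℕ} (hi : i ∈ b) (hi' : i ∈ b') : b = b' :=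
  hP.2.1.elim hb hb' (Finset.not_disjoint_iff.2 ⟨i, hi, hi'⟩)

theorem isPartitionOn_singleton (hD : D.Nonempty) : IsPartitionOn D {D} :=
  ⟨by simpa using hD, by simp, by simp⟩

theorem IsPartitionOn.union (hP : IsPartitionOn C P) (hR : IsPartitionOn E R)
    (hCE : Disjoint C E) : IsPartitionOn (C ∪ E) (P ∪ R) := by
  refine ⟨fun b hb => (Finset.mem_union.1 hb).elim (hP.1 b) (hR.1 b), ?_, ?_⟩
  · rw [Finset.coe_union, Set.pairwiseDisjoint_union]
    exact ⟨hP.2.1, hR.2.1, fun b hb b' hb' _ => hCE.mono (hP.subset hb) (hR.subset hb')⟩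
  · rw [Finset.sup_union, hP.2.2, hR.2.2, Finset.sup_eq_union]

theorem IsPartitionOn.filter_subset (hP : IsPartitionOn g P) (hCg : C ⊆ g)
    (hC : ∀ b ∈ P, b ⊆ C ∨ Disjoint b C) : IsPartitionOn C (P.filter (· ⊆ C)) := by
  refine hP.of_subset (Finset.filter_subset _ _) (subset_antisymm ?_ fun i hi => ?_)
  · exact Finset.sup_le fun b hb => (Finset.mem_filter.1 hb).2
  · obtain ⟨b, hb, hib⟩ := hP.exists_mem (hCg hi)
    have hbC : b ⊆ C := (hC b hb).resolve_right fun h => Finset.disjoint_left.1 h hib hi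
    exact Finset.mem_sup.2 ⟨b, Finset.mem_filter.2 ⟨hb, hbC⟩, hib⟩

theorem IsPartitionOn.filter_subset_union (hP : IsPartitionOn C P) (hR : IsPartitionOn E R)
    (hCE : Disjoint C E) : (P ∪ R).filter (· ⊆ C) = P := by
  have hRC : ∀ b ∈ R, ¬ b ⊆ C := fun b hb hbC =>
    (hR.1 b hb).ne_empty (disjoint_self.1 (hCE.mono hbC (hR.subset hb)))
  rw [Finset.filter_union, Finset.filter_true_of_mem fun b => hP.subset,
    Finset.filter_false_of_mem hRC, Finset.union_empty]

theorem IsPartitionOn.erase (hP : IsPartitionOn g P) (hD : D ∈ P) :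
    IsPartitionOn (g \ D) (P.erase D) := by
  refine hP.of_subset (Finset.erase_subset D P) (Finset.ext fun i => ?_)
  simp only [Finset.mem_sup, Finset.mem_erase, Finset.mem_sdiff, id_eq]
  constructor
  · rintro ⟨b, ⟨hbD, hb⟩, hi⟩
    exact ⟨hP.subset hb hi, fun hiD => hbD (hP.eq_of_mem hb hD hi hiD)⟩
  · rintro ⟨hi, hiD⟩
    obtain ⟨b, hb, hib⟩ := hP.exists_mem hi
    exact ⟨b, ⟨fun hbD => hiD (hbD ▸ hib), hb⟩, hib⟩

theorem Admissible.mono (hP : Admissible s P) (hR : R ⊆ P) : Admissible s R :=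
  fun b hb b' hb' => hP b (hR hb) b' (hR hb')

theorem Admissible.union (hP : Admissible s P) (hR : Admissible s R)
    (hPR : ∀ b ∈ P, ∀ b' ∈ R, ∀ j ∈ b, letterAt s j = Letter.w → ¬ InnerPos j b')
    (hRP : ∀ b ∈ R, ∀ b' ∈ P, ∀ j ∈ b, letterAt s j = Letter.w → ¬ InnerPos j b') :
    Admissible s (P ∪ R) := by
  intro b hb b' hb' hne
  rcases Finset.mem_union.1 hb with hb | hb <;> rcases Finset.mem_union.1 hb' with hb' | hb'
  · exact hP b hb b' hb' hne
  · exact hPR b hb b' hb'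
  · exact hRP b hb b' hb'
  · exact hR b hb b' hb' hne

theorem not_innerPos_of_lt {j : ℕ} {b : Finset ℕ} (h : ∀ i ∈ b, i < j) : ¬ InnerPos j b :=
  fun ⟨_, _, _, m, hm, _, hjm⟩ => (h m hm).asymm hjm

theorem not_innerPos_of_gt {j : ℕ} {b : Finset ℕ} (h : ∀ i ∈ b, j < i) : ¬ InnerPos j b :=
  fun ⟨_, i, hi, _, _, hij, _⟩ => (h i hi).asymm hij

theorem mem_cutPartitions : P ∈ cutPartitions s K g ↔
    IsPartitionOn g P ∧ Admissible s P ∧ ∀ k ∈ K, ∀ b ∈ P, ¬ InnerPos k b := by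
  simp only [cutPartitions, Finset.mem_filter, mem_APfin, and_assoc]

theorem cutPartitions_empty (s : Word) (g : Finset ℕ) : cutPartitions s ∅ g = APfin s g := by
  ext P
  simp [mem_cutPartitions, mem_APfin]

theorem cutSum_empty {M L : Word → ℂ} (hM1 : M [] = 1) (hL : IsCumulants M L) (s : Word)
    (g : Finset ℕ) : cutSum L s ∅ g = M (wordOf s g) := by
  rw [cutSum, cutPartitions_empty, sum_APfin_eq_moment hM1 hL]

theorem filter_subset_mem_cutPartitions (hP : P ∈ cutPartitions s K g) (hCg : C ⊆ g)
    (hC : ∀ b ∈ P, b ⊆ C ∨ Disjoint b C) (hK' : K' ⊆ K) :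
    P.filter (· ⊆ C) ∈ cutPartitions s K' C := by
  obtain ⟨hpart, hadm, hcut⟩ := mem_cutPartitions.1 hP
  exact mem_cutPartitions.2 ⟨hpart.filter_subset hCg hC, hadm.mono (Finset.filter_subset _ _),
    fun k hk b hb => hcut k (hK' hk) b (Finset.mem_of_mem_filter b hb)⟩

theorem subset_or_subset_of_mem_cutPartitions (hC : ∀ i ∈ C, i < k) (hE : ∀ i ∈ E, k < i)
    (hP : P ∈ cutPartitions s (insert k K) (C ∪ E)) {b : Finset ℕ} (hb : b ∈ P) :
    b ⊆ C ∨ b ⊆ E := by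
  obtain ⟨hpart, -, hcut⟩ := mem_cutPartitions.1 hP
  have hk : k ∉ C ∪ E := fun hk =>
    (Finset.mem_union.1 hk).elim (fun h => (hC k h).false) (fun h => (hE k h).false)
  by_contra! hsplit
  obtain ⟨j, hj, hjC⟩ := Finset.not_subset.1 hsplit.1
  obtain ⟨i, hi, hiE⟩ := Finset.not_subset.1 hsplit.2
  have hiC : i ∈ C := (Finset.mem_union.1 (hpart.subset hb hi)).resolve_right hiE
  have hjE : j ∈ E := (Finset.mem_union.1 (hpart.subset hb hj)).resolve_left hjC
  exact hcut k (Finset.mem_insert_self k K) b hb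
    ⟨fun hkb => hk (hpart.subset hb hkb), i, hi, j, hj, hC i hiC, hE j hjE⟩

theorem disjoint_of_separated (hC : ∀ i ∈ C, i < k) (hE : ∀ i ∈ E, k < i) : Disjoint C E :=
  Finset.disjoint_left.2 fun i hi hi' => (hC i hi).asymm (hE i hi')

theorem union_mem_cutPartitions (hC : ∀ i ∈ C, i < k) (hE : ∀ i ∈ E, k < i)
    (hK : ∀ i ∈ K, k < i) (hP : P ∈ cutPartitions s ∅ C) (hR : R ∈ cutPartitions s K E) :
    P ∪ R ∈ cutPartitions s (insert k K) (C ∪ E) := by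
  obtain ⟨hPpart, hPadm, -⟩ := mem_cutPartitions.1 hP
  obtain ⟨hRpart, hRadm, hRcut⟩ := mem_cutPartitions.1 hR
  have hlt : ∀ b ∈ P, ∀ i ∈ b, i < k := fun b hb i hi => hC i (hPpart.subset hb hi)
  have hgt : ∀ b ∈ R, ∀ i ∈ b, k < i := fun b hb i hi => hE i (hRpart.subset hb hi)
  refine mem_cutPartitions.2 ⟨hPpart.union hRpart (disjoint_of_separated hC hE),
    hPadm.union hRadm ?_ ?_, fun j hj b hb => ?_⟩
  · exact fun b hb b' hb' j hj _ =>
      not_innerPos_of_gt fun i hi => (hlt b hb j hj).trans (hgt b' hb' i hi)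
  · exact fun b hb b' hb' j hj _ =>
      not_innerPos_of_lt fun i hi => (hlt b' hb' i hi).trans (hgt b hb j hj)
  · rcases Finset.mem_union.1 hb with hb | hb
    · have hkj : k ≤ j := (Finset.mem_insert.1 hj).elim ge_of_eq fun hj => (hK j hj).le
      exact not_innerPos_of_lt fun i hi => (hlt b hb i hi).trans_le hkj
    · rcases Finset.mem_insert.1 hj with rfl | hj
      · exact not_innerPos_of_gt (hgt b hb)
      · exact hRcut j hj b hb

theorem cutSum_insert_union (L : Word → ℂ) (s : Word) (hC : ∀ i ∈ C, i < k)
    (hE : ∀ i ∈ E, k < i) (hK : ∀ i ∈ K, k < i) :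
    cutSum L s (insert k K) (C ∪ E) = cutSum L s ∅ C * cutSum L s K E := by
  have hCE := disjoint_of_separated hC hE
  have hsplit {P} (hP : P ∈ cutPartitions s (insert k K) (C ∪ E)) :
      P.filter (· ⊆ C) ∪ P.filter (· ⊆ E) = P := by
    rw [← Finset.filter_or]
    exact Finset.filter_true_of_mem fun b =>
      subset_or_subset_of_mem_cutPartitions hC hE hP
  have hleft {P} (hP : P ∈ cutPartitions s (insert k K) (C ∪ E)) :
      P.filter (· ⊆ C) ∈ cutPartitions s ∅ C :=
    filter_subset_mem_cutPartitions hP Finset.subset_union_left (fun b hb =>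
      (subset_or_subset_of_mem_cutPartitions hC hE hP hb).imp_right fun h => hCE.symm.mono_left h)
      (Finset.empty_subset _)
  have hright {P} (hP : P ∈ cutPartitions s (insert k K) (C ∪ E)) :
      P.filter (· ⊆ E) ∈ cutPartitions s K E :=
    filter_subset_mem_cutPartitions hP Finset.subset_union_right (fun b hb =>
      (subset_or_subset_of_mem_cutPartitions hC hE hP hb).symm.imp_right fun h => hCE.mono_left h)
      (Finset.subset_insert _ _)
  rw [cutSum, cutSum, cutSum, Finset.sum_mul_sum, ← Finset.sum_product']
  refine Finset.sum_nbij' (fun P => (P.filter (· ⊆ C), P.filter (· ⊆ E))) (fun p => p.1 ∪ p.2)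
    (fun P hP => Finset.mem_product.2 ⟨hleft hP, hright hP⟩) ?_ (fun P hP => hsplit hP) ?_ ?_
  · intro p hp
    obtain ⟨hp₁, hp₂⟩ := Finset.mem_product.1 hp
    exact union_mem_cutPartitions hC hE hK hp₁ hp₂
  · intro p hp
    obtain ⟨hp₁, hp₂⟩ := Finset.mem_product.1 hp
    have hp₁ := (mem_cutPartitions.1 hp₁).1
    have hp₂ := (mem_cutPartitions.1 hp₂).1
    refine Prod.ext (hp₁.filter_subset_union hp₂ hCE) ?_
    rw [Finset.union_comm]
    exact hp₂.filter_subset_union hp₁ hCE.symm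
  · intro P hP
    have hdisj : Disjoint (P.filter (· ⊆ C)) (P.filter (· ⊆ E)) :=
      Finset.disjoint_left.2 fun b hb hb' =>
        ((mem_cutPartitions.1 hP).1.1 b (Finset.mem_of_mem_filter b hb)).ne_empty
          (disjoint_self.1 (hCE.mono (Finset.mem_filter.1 hb).2 (Finset.mem_filter.1 hb').2))
    rw [← Finset.prod_union hdisj, hsplit hP]

theorem erase_mem_cutPartitions (hP : P ∈ APfin s g) (hD : D ∈ P) :
    P.erase D ∈ cutPartitions s (D.filter (letterAt s · = Letter.w)) (g \ D) := by
  obtain ⟨hpart, hadm⟩ := mem_APfin.1 hP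
  refine mem_cutPartitions.2 ⟨hpart.erase hD, hadm.mono (Finset.erase_subset D P), ?_⟩
  intro k hk b hb
  obtain ⟨hkD, hkw⟩ := Finset.mem_filter.1 hk
  exact hadm D hD b (Finset.mem_of_mem_erase hb) (Finset.ne_of_mem_erase hb).symm k hkD hkw

theorem insert_mem_APfin (hDg : D ⊆ g) (hD : D.Nonempty)
    (hinner : ∀ j ∈ g \ D, letterAt s j = Letter.w → ¬ InnerPos j D)
    (hP : P ∈ cutPartitions s (D.filter (letterAt s · = Letter.w)) (g \ D)) :
    insert D P ∈ APfin s g := by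
  obtain ⟨hpart, hadm, hcut⟩ := mem_cutPartitions.1 hP
  rw [Finset.insert_eq]
  refine mem_APfin.2 ⟨?_, Admissible.union (by simp [Admissible]) hadm ?_ ?_⟩
  · rw [← Finset.union_sdiff_of_subset hDg]
    exact (isPartitionOn_singleton hD).union hpart Finset.disjoint_sdiff
  · rintro b hb b' hb' j hj hjw
    rw [Finset.mem_singleton.1 hb] at hj
    exact hcut j (Finset.mem_filter.2 ⟨hj, hjw⟩) b' hb'
  · rintro b hb b' hb' j hj hjw
    rw [Finset.mem_singleton.1 hb']
    exact hinner j (hpart.subset hb hj) hjw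

theorem sum_APfin_filter_mem (L : Word → ℂ) (hDg : D ⊆ g) (hD : D.Nonempty)
    (hinner : ∀ j ∈ g \ D, letterAt s j = Letter.w → ¬ InnerPos j D) :
    ∑ P ∈ APfin s g with D ∈ P, ∏ b ∈ P, L (wordOf s b) =
      L (wordOf s D) * cutSum L s (D.filter (letterAt s · = Letter.w)) (g \ D) := by
  have hnotMem {P} (hP : P ∈ cutPartitions s (D.filter (letterAt s · = Letter.w)) (g \ D)) :
      D ∉ P := fun h => hD.ne_empty
    (disjoint_self.1 (Finset.disjoint_sdiff.mono_right ((mem_cutPartitions.1 hP).1.subset h)))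
  rw [cutSum, Finset.mul_sum]
  refine Finset.sum_nbij' (·.erase D) (insert D ·) ?_ ?_ ?_ ?_ ?_
  · exact fun P hP => erase_mem_cutPartitions (Finset.mem_filter.1 hP).1 (Finset.mem_filter.1 hP).2
  · exact fun P hP => Finset.mem_filter.2
      ⟨insert_mem_APfin hDg hD hinner hP, Finset.mem_insert_self D P⟩
  · exact fun P hP => Finset.insert_erase (Finset.mem_filter.1 hP).2
  · exact fun P hP => Finset.erase_insert (hnotMem hP)
  · exact fun P hP => (Finset.mul_prod_erase P _ (Finset.mem_filter.1 hP).2).symm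

theorem not_innerPos_of_mem_APfin (hP : P ∈ APfin s g) (hD : D ∈ P) {j : ℕ} (hj : j ∈ g \ D)
    (hjw : letterAt s j = Letter.w) : ¬ InnerPos j D := by
  obtain ⟨hpart, hadm⟩ := mem_APfin.1 hP
  obtain ⟨hjg, hjD⟩ := Finset.mem_sdiff.1 hj
  obtain ⟨b, hb, hjb⟩ := hpart.exists_mem hjg
  exact hadm b hb D hD (fun h => hjD (h ▸ hjb)) j hjb hjw

theorem sum_APfin_eq_sum_block {i : ℕ} (hi : i ∈ g) (s : Word) (f : Finset (Finset ℕ) → ℂ) :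
    ∑ P ∈ APfin s g, f P = ∑ D ∈ g.powerset with i ∈ D, ∑ P ∈ APfin s g with D ∈ P, f P := by
  rw [Finset.sum_congr rfl fun D _ => Finset.sum_filter (D ∈ ·) f, Finset.sum_comm]
  refine Finset.sum_congr rfl fun P hP => ?_
  have hpart := (mem_APfin.1 hP).1
  obtain ⟨D, hD, hiD⟩ := hpart.exists_mem hi
  have hDg : D ∈ g.powerset.filter (i ∈ ·) :=
    Finset.mem_filter.2 ⟨Finset.mem_powerset.2 (hpart.subset hD), hiD⟩
  rw [Finset.sum_eq_single_of_mem D hDg fun D' hD' hne => if_neg fun h =>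
    hne (hpart.eq_of_mem h hD (Finset.mem_filter.1 hD').2 hiD), if_pos hD]

end CutPartitions

section Subwords

variable {s : Word} {A B : Finset ℕ}

theorem wordOf_singleton (s : Word) (k : ℕ) : wordOf s {k} = [letterAt s k] := by
  simp [wordOf]

theorem length_wordOf (s : Word) (b : Finset ℕ) : (wordOf s b).length = b.card := by
  simp [wordOf]

theorem mem_wordOf {x : Letter} : x ∈ wordOf s B ↔ ∃ i ∈ B, letterAt s i = x := by
  simp [wordOf]

theorem wordOf_union (s : Word) (h : ∀ i ∈ A, ∀ j ∈ B, i < j) :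
    wordOf s (A ∪ B) = wordOf s A ++ wordOf s B := by
  have hlt : (A.sort (· ≤ ·) ++ B.sort (· ≤ ·)).Pairwise (· < ·) :=
    List.pairwise_append.2 ⟨A.sortedLT_sort.pairwise, B.sortedLT_sort.pairwise, fun i hi j hj =>
      h i ((Finset.mem_sort _).1 hi) j ((Finset.mem_sort _).1 hj)⟩
  have hsort : (A ∪ B).sort (· ≤ ·) = A.sort (· ≤ ·) ++ B.sort (· ≤ ·) := by
    rw [← (List.toFinset_sort (· ≤ ·) hlt.nodup).2 (hlt.imp le_of_lt), List.toFinset_append,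
      Finset.sort_toFinset, Finset.sort_toFinset]
  rw [wordOf, hsort, List.map_append, wordOf, wordOf]

theorem wordOf_range_length (s : Word) : wordOf s (Finset.range s.length) = s := by
  rw [wordOf, Finset.sort_range]
  refine List.ext_getElem (by simp) fun i _ hi => ?_
  simp [letterAt, hi]

theorem wordOf_eq_replicate (h : ∀ i ∈ A, letterAt s i ≠ Letter.w) :
    wordOf s A = List.replicate A.card Letter.z := by
  rw [← length_wordOf s A]
  exact eq_replicate_of_w_notMem fun hw =>
    let ⟨i, hi, hiw⟩ := mem_wordOf.1 hw
    h i hi hiw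

@[elab_as_elim]
theorem position_induction {P : Finset ℕ → Prop} (s : Word)
    (run : ∀ A, (∀ i ∈ A, letterAt s i ≠ Letter.w) → P A)
    (union_insert : ∀ A q E, (∀ i ∈ A, letterAt s i ≠ Letter.w) → (∀ i ∈ A, i < q) →
      (∀ i ∈ E, q < i) → letterAt s q = Letter.w → P E → P (A ∪ insert q E))
    (g : Finset ℕ) : P g := by
  suffices ∀ A, (∀ i ∈ A, letterAt s i ≠ Letter.w) → (∀ i ∈ A, ∀ j ∈ g, i < j) → P (A ∪ g) by
    simpa using this ∅
  induction g using Finset.induction_on_min with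
  | empty => intro A hA _; simpa using run A hA
  | insert q g hq ih =>
    intro A hA hAg
    by_cases hqw : letterAt s q = Letter.w
    · refine union_insert A q g hA (fun i hi => hAg i hi q (Finset.mem_insert_self q g)) hq hqw ?_
      simpa using ih ∅
    · rw [Finset.union_insert, ← Finset.insert_union]
      refine ih _ ((Finset.forall_mem_insert _ _ _).2 ⟨hqw, hA⟩) ?_
      exact (Finset.forall_mem_insert _ _ _).2
        ⟨hq, fun i hi j hj => hAg i hi j (Finset.mem_insert_of_mem hj)⟩

end Subwords

section AnchoredSum

/-- Every letter `w` at a position of `g` outside `D` comes after all of `D`. Among the subsets `D`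
of `g` containing a letter `w`, these are the possible blocks of the first `w` in an admissible
partition of `g`. -/
def Anchored (s : Word) (g D : Finset ℕ) : Prop :=
  ∀ j ∈ g \ D, letterAt s j = Letter.w → ∀ d ∈ D, d < j

open scoped Classical in
/-- The sum over the anchored `D ⊆ g`, where `D` has weight `F` and its complement is partitioned
into blocks that a `w` in `D` does not allow to cross it. For `F = δL` this is the moment-cumulant
sum, arranged by the block of the first `w`. -/
noncomputable def anchoredSum (L : Word → ℂ) (s : Word) (F : Word → ℂ) (g : Finset ℕ) : ℂ :=
  ∑ D ∈ g.powerset with Anchored s g D,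
    F (wordOf s D) * cutSum L s (D.filter (letterAt s · = Letter.w)) (g \ D)

variable {s : Word} {g A C D E : Finset ℕ} {q : ℕ}

theorem Anchored.mem_first {i : ℕ} (hD : Anchored s g D) (hi : i ∈ g)
    (hiw : letterAt s i = Letter.w) (hmin : ∀ j ∈ g, letterAt s j = Letter.w → i ≤ j)
    (hDg : D ⊆ g) (hDw : ∃ d ∈ D, letterAt s d = Letter.w) : i ∈ D := by
  by_contra hiD
  obtain ⟨d, hd, hdw⟩ := hDw
  exact (hD i (Finset.mem_sdiff.2 ⟨hi, hiD⟩) hiw d hd).not_ge (hmin d (hDg hd) hdw)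

theorem anchored_iff_not_innerPos {i : ℕ} (hmin : ∀ j ∈ g, letterAt s j = Letter.w → i ≤ j)
    (hi : i ∈ D) :
    Anchored s g D ↔ ∀ j ∈ g \ D, letterAt s j = Letter.w → ¬ InnerPos j D := by
  refine forall₃_congr fun j hj hjw => ⟨not_innerPos_of_lt, fun hinner d hd => ?_⟩
  obtain ⟨hjg, hjD⟩ := Finset.mem_sdiff.1 hj
  by_contra! hjd
  have hij : i < j := (hmin j hjg hjw).lt_of_ne fun h => hjD (h ▸ hi)
  exact hinner ⟨hjD, i, hi, d, hd, hij, hjd.lt_of_ne fun h => hjD (h ▸ hd)⟩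

theorem cutSum_empty_eq_anchoredSum (L : Word → ℂ) (hg : ∃ i ∈ g, letterAt s i = Letter.w) :
    cutSum L s ∅ g = anchoredSum L s (deltaF L) g := by
  classical
  set I := g.filter (letterAt s · = Letter.w)
  have hI : I.Nonempty := Finset.filter_nonempty_iff.2 hg
  obtain ⟨hi, hiw⟩ : I.min' hI ∈ g ∧ letterAt s (I.min' hI) = Letter.w :=
    Finset.mem_filter.1 (I.min'_mem hI)
  set i := I.min' hI
  have hmin : ∀ j ∈ g, letterAt s j = Letter.w → i ≤ j := fun j hj hjw =>
    I.min'_le j (Finset.mem_filter.2 ⟨hj, hjw⟩)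
  rw [cutSum, cutPartitions_empty, sum_APfin_eq_sum_block hi, anchoredSum, Finset.sum_filter,
    Finset.sum_filter]
  refine Finset.sum_congr rfl fun D hD => ?_
  rw [Finset.mem_powerset] at hD
  by_cases hiD : i ∈ D
  · rw [if_pos hiD, deltaF, if_pos (mem_wordOf.2 ⟨i, hiD, hiw⟩)]
    split_ifs with hanch
    · exact sum_APfin_filter_mem L hD ⟨i, hiD⟩ ((anchored_iff_not_innerPos hmin hiD).1 hanch)
    · rw [Finset.filter_false_of_mem fun P hP hDP => hanch ?_, Finset.sum_empty]
      exact (anchored_iff_not_innerPos hmin hiD).2 fun j => not_innerPos_of_mem_APfin hP hDP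
  · rw [if_neg hiD]
    split_ifs with hanch
    · have hDw : Letter.w ∉ wordOf s D := fun h =>
        hiD (hanch.mem_first hi hiw hmin hD (mem_wordOf.1 h))
      rw [deltaF, if_neg hDw, zero_mul]
    · rfl

theorem sum_powerset_union {α β : Type*} [DecidableEq α] [AddCommMonoid β] {A B : Finset α}
    (hAB : Disjoint A B) (f : Finset α → β) :
    ∑ D ∈ (A ∪ B).powerset, f D = ∑ C ∈ A.powerset, ∑ D ∈ B.powerset, f (C ∪ D) := by
  induction A using Finset.induction_on generalizing f with
  | empty => simp
  | insert a A ha ih =>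
    obtain ⟨haB, hAB⟩ := Finset.disjoint_insert_left.1 hAB
    rw [Finset.insert_union, Finset.sum_powerset_insert (by simp [ha, haB]), ih hAB, ih hAB,
      Finset.sum_powerset_insert ha]
    simp only [Finset.insert_union]

theorem union_insert_sdiff_union_insert (hA : ∀ i ∈ A, i < q) (hE : ∀ i ∈ E, q < i) (hC : C ⊆ A)
    (hD : D ⊆ E) : (A ∪ insert q E) \ (C ∪ insert q D) = A \ C ∪ E \ D := by
  grind

theorem union_insert_sdiff_left (hA : ∀ i ∈ A, i < q) (hE : ∀ i ∈ E, q < i) (hC : C ⊆ A) :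
    (A ∪ insert q E) \ C = A \ C ∪ insert q E := by
  grind

theorem anchored_union_insert (hAw : ∀ i ∈ A, letterAt s i ≠ Letter.w) (hA : ∀ i ∈ A, i < q)
    (hE : ∀ i ∈ E, q < i) (hC : C ⊆ A) (hD : D ⊆ E) :
    Anchored s (A ∪ insert q E) (C ∪ insert q D) ↔ Anchored s E D := by
  rw [Anchored, union_insert_sdiff_union_insert hA hE hC hD]
  constructor
  · exact fun h j hj hjw d hd => h j (Finset.mem_union_right _ hj) hjw d
      (Finset.mem_union_right _ (Finset.mem_insert_of_mem hd))
  · intro h j hj hjw d hd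
    rcases Finset.mem_union.1 hj with hj | hj
    · exact absurd hjw (hAw j (Finset.mem_sdiff.1 hj).1)
    · have hqj : q < j := hE j (Finset.mem_sdiff.1 hj).1
      rcases Finset.mem_union.1 hd with hd | hd
      · exact (hA d (hC hd)).trans hqj
      · rcases Finset.mem_insert.1 hd with rfl | hd
        · exact hqj
        · exact h j hj hjw d hd

theorem anchored_union_insert_iff_eq_empty (hAw : ∀ i ∈ A, letterAt s i ≠ Letter.w)
    (hA : ∀ i ∈ A, i < q) (hE : ∀ i ∈ E, q < i) (hq : letterAt s q = Letter.w) (hC : C ⊆ A)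
    (hD : D ⊆ E) : Anchored s (A ∪ insert q E) (C ∪ D) ↔ D = ∅ := by
  constructor
  · refine fun h => Finset.eq_empty_of_forall_notMem fun d hd => ?_
    have hqD : q ∈ (A ∪ insert q E) \ (C ∪ D) := by grind
    exact (hE d (hD hd)).asymm (h q hqD hq d (Finset.mem_union_right C hd))
  · rintro rfl j hj hjw d hd
    rw [Finset.union_empty] at hj hd
    rw [union_insert_sdiff_left hA hE hC, Finset.mem_union] at hj
    rcases hj with hj | hj
    · exact absurd hjw (hAw j (Finset.mem_sdiff.1 hj).1)
    · have hqj : q ≤ j := (Finset.mem_insert.1 hj).elim ge_of_eq fun hj => (hE j hj).le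
      exact (hA d (hC hd)).trans_le hqj

theorem wordOf_union_insert (hAw : ∀ i ∈ A, letterAt s i ≠ Letter.w) (hA : ∀ i ∈ A, i < q)
    (hE : ∀ i ∈ E, q < i) (hq : letterAt s q = Letter.w) :
    wordOf s (A ∪ insert q E) =
      List.replicate A.card Letter.z ++ Letter.w :: wordOf s E := by
  have hlt : ∀ i ∈ A, ∀ j ∈ insert q E, i < j := fun i hi => (Finset.forall_mem_insert _ _ _).2
    ⟨hA i hi, fun j hj => (hA i hi).trans (hE j hj)⟩
  rw [wordOf_union s hlt, Finset.insert_eq, wordOf_union s (by simpa using hE), wordOf_singleton,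
    hq, wordOf_eq_replicate hAw, List.singleton_append]

variable {M L : Word → ℂ}

theorem anchoredSum_of_forall_ne_w (hM1 : M [] = 1) (hL : IsCumulants M L) (F : Word → ℂ)
    (hAw : ∀ i ∈ A, letterAt s i ≠ Letter.w) :
    anchoredSum L s F A = ∑ C ∈ A.powerset,
      F (List.replicate C.card Letter.z) * M (List.replicate (A.card - C.card) Letter.z) := by
  classical
  rw [anchoredSum, Finset.filter_true_of_mem fun C _ j hj hjw =>
    absurd hjw (hAw j (Finset.mem_sdiff.1 hj).1)]
  refine Finset.sum_congr rfl fun C hC => ?_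
  rw [Finset.mem_powerset] at hC
  have hCw : ∀ i ∈ C, letterAt s i ≠ Letter.w := fun i hi => hAw i (hC hi)
  have hACw : ∀ i ∈ A \ C, letterAt s i ≠ Letter.w := fun i hi => hAw i (Finset.mem_sdiff.1 hi).1
  rw [Finset.filter_false_of_mem hCw, cutSum_empty hM1 hL, wordOf_eq_replicate hCw,
    wordOf_eq_replicate hACw, Finset.card_sdiff_of_subset hC]

theorem cutSum_union_insert (hM1 : M [] = 1) (hL : IsCumulants M L)
    (hAw : ∀ i ∈ A, letterAt s i ≠ Letter.w) (hA : ∀ i ∈ A, i < q) (hE : ∀ i ∈ E, q < i)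
    (hq : letterAt s q = Letter.w) (hC : C ⊆ A) (hD : D ⊆ E) :
    cutSum L s ((C ∪ insert q D).filter (letterAt s · = Letter.w))
        ((A ∪ insert q E) \ (C ∪ insert q D)) =
      M (List.replicate (A.card - C.card) Letter.z) *
        cutSum L s (D.filter (letterAt s · = Letter.w)) (E \ D) := by
  have hACw : ∀ i ∈ A \ C, letterAt s i ≠ Letter.w := fun i hi => hAw i (Finset.mem_sdiff.1 hi).1
  rw [union_insert_sdiff_union_insert hA hE hC hD, Finset.filter_union,
    Finset.filter_false_of_mem fun i hi => hAw i (hC hi), Finset.empty_union,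
    Finset.filter_insert, if_pos hq,
    cutSum_insert_union L s (fun i hi => hA i (Finset.mem_sdiff.1 hi).1)
      (fun i hi => hE i (Finset.mem_sdiff.1 hi).1)
      (fun i hi => hE i (hD (Finset.mem_of_mem_filter i hi))),
    cutSum_empty hM1 hL, wordOf_eq_replicate hACw, Finset.card_sdiff_of_subset hC]

theorem anchoredSum_union_insert (hM1 : M [] = 1) (hL : IsCumulants M L) (F : Word → ℂ)
    (hAw : ∀ i ∈ A, letterAt s i ≠ Letter.w) (hA : ∀ i ∈ A, i < q) (hE : ∀ i ∈ E, q < i)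
    (hq : letterAt s q = Letter.w) :
    anchoredSum L s F (A ∪ insert q E) =
      ∑ C ∈ A.powerset, F (List.replicate C.card Letter.z) *
        M (List.replicate (A.card - C.card) Letter.z ++ Letter.w :: wordOf s E) +
      ∑ C ∈ A.powerset,
        anchoredSum L s (fun y => F (List.replicate C.card Letter.z ++ Letter.w :: y)) E *
          M (List.replicate (A.card - C.card) Letter.z) := by
  have hqE : q ∉ E := fun h => (hE q h).false
  have hdisj : Disjoint A (insert q E) := by
    rw [Finset.disjoint_insert_right]
    exact ⟨fun h => (hA q h).false, disjoint_of_separated hA hE⟩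
  rw [anchoredSum, Finset.sum_filter, sum_powerset_union hdisj, ← Finset.sum_add_distrib]
  refine Finset.sum_congr rfl fun C hC => ?_
  rw [Finset.mem_powerset] at hC
  have hCw : ∀ i ∈ C, letterAt s i ≠ Letter.w := fun i hi => hAw i (hC hi)
  have hACw : ∀ i ∈ A \ C, letterAt s i ≠ Letter.w := fun i hi => hAw i (Finset.mem_sdiff.1 hi).1
  have hCq : ∀ i ∈ C, i < q := fun i hi => hA i (hC hi)
  have hACq : ∀ i ∈ A \ C, i < q := fun i hi => hA i (Finset.mem_sdiff.1 hi).1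
  rw [Finset.sum_powerset_insert hqE]
  congr 1
  · rw [Finset.sum_eq_single_of_mem ∅ (Finset.empty_mem_powerset E) fun D hD hne =>
      if_neg (mt (anchored_union_insert_iff_eq_empty hAw hA hE hq hC
        (Finset.mem_powerset.1 hD)).1 hne),
      if_pos ((anchored_union_insert_iff_eq_empty hAw hA hE hq hC (Finset.empty_subset E)).2 rfl),
      Finset.union_empty, Finset.filter_false_of_mem hCw, cutSum_empty hM1 hL,
      wordOf_eq_replicate hCw, union_insert_sdiff_left hA hE hC,
      wordOf_union_insert hACw hACq hE hq, Finset.card_sdiff_of_subset hC]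
  · rw [anchoredSum, Finset.sum_filter, Finset.sum_mul]
    refine Finset.sum_congr rfl fun D hD => ?_
    rw [Finset.mem_powerset] at hD
    have hDq : ∀ i ∈ D, q < i := fun i hi => hE i (hD hi)
    have hanch := anchored_union_insert hAw hA hE hC hD
    by_cases hD' : Anchored s E D
    swap
    · rw [if_neg (mt hanch.1 hD'), if_neg hD', zero_mul]
    rw [if_pos (hanch.2 hD'), if_pos hD', wordOf_union_insert hCw hCq hDq hq,
      cutSum_union_insert hM1 hL hAw hA hE hq hC hD]
    ring

end AnchoredSum

section MomentFormula

theorem sum_powerset_eq_factorial_mul_conv (f h : Word → ℂ) (A : Finset ℕ) (x : Letter) :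
    ∑ C ∈ A.powerset, f (List.replicate C.card x) * h (List.replicate (A.card - C.card) x) =
      A.card ! * conv (fun u => f u / u.length !) (fun v => h v / v.length !)
        (List.replicate A.card x) := by
  rw [Finset.sum_powerset_apply_card
    fun c => f (List.replicate c x) * h (List.replicate (A.card - c) x), conv_replicate,
    Finset.mul_sum]
  refine Finset.sum_congr rfl fun c hc => ?_
  have hcA : c ≤ A.card := Nat.lt_succ_iff.1 (Finset.mem_range.1 hc)
  have hchoose : (A.card ! : ℂ) = A.card.choose c * c ! * (A.card - c) ! := by
    exact_mod_cast (Nat.choose_mul_factorial_mul_factorial hcA).symm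
  have hc0 : (c ! : ℂ) ≠ 0 := Nat.cast_ne_zero.2 c.factorial_ne_zero
  have hd0 : ((A.card - c) ! : ℂ) ≠ 0 := Nat.cast_ne_zero.2 (Nat.factorial_ne_zero _)
  rw [nsmul_eq_mul, hchoose, List.length_replicate, List.length_replicate]
  field_simp

theorem genFun_of_w_notMem (f : Word → ℂ) {r : Word} (hr : Letter.w ∉ r) :
    genFun f r = f r / r.length ! := by
  rw [genFun, nFact_of_w_notMem hr]

theorem genFun_append_w (f : Word → ℂ) {r : Word} (hr : Letter.w ∉ r) (t : Word) :
    genFun f (r ++ Letter.w :: t) = f (r ++ Letter.w :: t) / r.length ! / nFact t := by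
  rw [genFun, nFact_append_w, nFact_of_w_notMem hr, Nat.cast_mul, div_div]

theorem conv_starComp_append_w (f g h : Word → ℂ) {r : Word} (hr : Letter.w ∉ r) (t : Word) :
    conv (starComp f g) h (r ++ Letter.w :: t) =
      conv f (fun y => h (y ++ Letter.w :: t)) r +
        conv (fun x => conv (starComp (fun y => f (x ++ Letter.w :: y)) g) h t) g r := by
  simp only [conv_append_cons, starComp_append_w f g hr]
  rw [← conv_conv_swap]
  congr 1
  refine conv_congr fun u v huv => ?_
  rw [starComp_of_w_notMem f g fun hu => hr (huv ▸ List.mem_append_left v hu)]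

theorem genFun_append_w_left (f : Word → ℂ) {r : Word} (hr : Letter.w ∉ r) :
    genFun (fun y => f (r ++ Letter.w :: y)) =
      fun y => (r.length ! : ℂ) * genFun f (r ++ Letter.w :: y) := by
  funext y
  have hr0 : (r.length ! : ℂ) ≠ 0 := Nat.cast_ne_zero.2 r.length.factorial_ne_zero
  rw [genFun_append_w f hr, genFun]
  field_simp

variable {M L : Word → ℂ}

theorem anchoredSum_eq_nFact_mul_conv (hM1 : M [] = 1) (hL : IsCumulants M L) (F : Word → ℂ)
    (s : Word) (g : Finset ℕ) :
    anchoredSum L s F g = nFact (wordOf s g) *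
      conv (starComp (genFun F) (genFun M)) (genFun M) (wordOf s g) := by
  have hz (a : ℕ) : Letter.w ∉ List.replicate a Letter.z := by simp
  induction g using position_induction s generalizing F with
  | run A hAw =>
    rw [anchoredSum_of_forall_ne_w hM1 hL F hAw, sum_powerset_eq_factorial_mul_conv,
      wordOf_eq_replicate hAw, nFact_of_w_notMem (hz _), List.length_replicate]
    congr 1
    refine conv_congr fun u v huv => ?_
    have huv' : Letter.w ∉ u ∧ Letter.w ∉ v := by simpa [← huv] using hz A.card
    rw [starComp_of_w_notMem _ _ huv'.1, genFun_of_w_notMem F huv'.1, genFun_of_w_notMem M huv'.2]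
  | union_insert A q E hAw hA hE hq ih =>
    have he : (nFact (wordOf s E) : ℂ) ≠ 0 := Nat.cast_ne_zero.2 (nFact_ne_zero _)
    rw [anchoredSum_union_insert hM1 hL F hAw hA hE hq, wordOf_union_insert hAw hA hE hq,
      nFact_append_w, nFact_of_w_notMem (hz _), conv_starComp_append_w _ _ _ (hz _),
      List.length_replicate, Nat.cast_mul, mul_assoc, mul_add, mul_add, mul_comm (nFact _ : ℂ),
      mul_comm (nFact _ : ℂ), ← conv_mul_const_right, ← conv_mul_const_left]
    set e := wordOf s E
    set X : Word → ℂ := fun x =>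
      conv (starComp (fun y => genFun F (x ++ Letter.w :: y)) (genFun M)) (genFun M) e
    have hX (c : ℕ) : anchoredSum L s (fun y => F (List.replicate c Letter.z ++ Letter.w :: y)) E =
        (List.replicate c Letter.z).length ! * (X (List.replicate c Letter.z) * nFact e) := by
      rw [ih, genFun_append_w_left F (hz c), starComp_const_mul, conv_const_mul_left]
      ring
    congr 1
    · rw [sum_powerset_eq_factorial_mul_conv F (fun v => M (v ++ Letter.w :: e))]
      congr 1
      refine conv_congr fun u v huv => ?_
      have huv' : Letter.w ∉ u ∧ Letter.w ∉ v := by simpa [← huv] using hz A.card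
      rw [genFun_of_w_notMem F huv'.1, genFun_append_w M huv'.2, div_mul_cancel₀ _ he]
    · simp only [hX]
      rw [sum_powerset_eq_factorial_mul_conv fun u => u.length ! * (X u * nFact e)]
      congr 1
      refine conv_congr fun u v huv => ?_
      have hv : Letter.w ∉ v := fun hv => hz A.card (huv ▸ List.mem_append_right u hv)
      have hu0 : (u.length ! : ℂ) ≠ 0 := Nat.cast_ne_zero.2 u.length.factorial_ne_zero
      rw [genFun_of_w_notMem M hv, mul_div_cancel_left₀ _ hu0]

end MomentFormula

section Identity

theorem restrZ_of_w_notMem (f : Word → ℂ) {r : Word} (hr : Letter.w ∉ r) : restrZ f r = f r :=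
  if_neg hr

theorem restrZ_of_w_mem (f : Word → ℂ) (s : Word) (hs : Letter.w ∈ s) : restrZ f s = 0 :=
  if_pos hs

theorem restrZ_add_deltaF (f : Word → ℂ) (s : Word) : restrZ f s + deltaF f s = f s := by
  by_cases hs : Letter.w ∈ s <;> simp [restrZ, deltaF, hs]

theorem genFun_deltaF (f : Word → ℂ) : genFun (deltaF f) = deltaF (genFun f) := by
  funext s
  by_cases hs : Letter.w ∈ s <;> simp [genFun, deltaF, hs]

theorem genFun_nil (f : Word → ℂ) : genFun f [] = f [] := by
  simp [genFun_of_w_notMem]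

theorem genFun_eq_restrZ_add_conv {M L : Word → ℂ} (hM1 : M [] = 1) (hL : IsCumulants M L) :
    genFun M = fun s => restrZ (genFun M) s +
      conv (starComp (deltaF (genFun L)) (genFun M)) (genFun M) s := by
  funext s
  by_cases hs : Letter.w ∈ s
  · have hpos : ∃ i ∈ Finset.range s.length, letterAt s i = Letter.w :=
      mem_wordOf.1 (by rwa [wordOf_range_length])
    have hsum : M s = nFact s * conv (starComp (genFun (deltaF L)) (genFun M)) (genFun M) s := by
      have hcut := (cutSum_empty hM1 hL s (Finset.range s.length)).symm
      rwa [cutSum_empty_eq_anchoredSum L hpos, anchoredSum_eq_nFact_mul_conv hM1 hL,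
        wordOf_range_length] at hcut
    rw [restrZ_of_w_mem _ _ hs, zero_add, ← genFun_deltaF, genFun, hsum,
      mul_div_cancel_left₀ _ (Nat.cast_ne_zero.2 (nFact_ne_zero s))]
  · rw [restrZ_of_w_notMem _ hs, conv_eq_zero fun u v huv => ?_, add_zero]
    have hu : Letter.w ∉ u := fun hu => hs (huv ▸ List.mem_append_left v hu)
    simp [starComp_of_w_notMem _ _ hu, deltaF, hu]

theorem conv_eq_single_nil_of_conv_restrZ {f g : Word → ℂ}
    (hfg : conv (restrZ f) g = Pi.single [] 1) {r : Word} (hr : Letter.w ∉ r) :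
    conv f g r = (Pi.single [] 1 : Word → ℂ) r := by
  rw [← hfg]
  refine conv_congr fun u v huv => ?_
  rw [restrZ_of_w_notMem f fun hu => hr (huv ▸ List.mem_append_left v hu)]

theorem starComp_sub_restrZ_eq_conv {f g l : Word → ℂ}
    (hf : f = fun s => restrZ f s + conv (starComp l f) f s)
    (hfg : conv (restrZ f) g = Pi.single [] 1) :
    (fun s => starComp f g s - restrZ f s) = conv l (starComp f g) := by
  have hcancel : starComp (starComp l f) g = l := by
    rw [starComp_starComp, starComp_congr_right l fun r hr =>
      conv_eq_single_nil_of_conv_restrZ hfg hr, starComp_single_nil]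
  have hfix : starComp f g = fun s => restrZ f s + conv l (starComp f g) s := by
    conv_lhs => rw [hf, starComp_add, starComp_eq_self g (restrZ_of_w_mem f), starComp_conv,
      hcancel]
  funext s
  rw [sub_eq_iff_eq_add', ← congrFun hfix s]

theorem conv_starComp_sub_restrZ_eq {f g h l : Word → ℂ}
    (hf : f = fun s => restrZ f s + conv (starComp l f) f s)
    (hfg : conv (restrZ f) g = Pi.single [] 1) (hh : conv (starComp f g) h = Pi.single [] 1) :
    conv (fun s => starComp f g s - restrZ f s) h = l := by
  funext s
  rw [starComp_sub_restrZ_eq_conv hf hfg, conv_assoc, hh, conv_single_nil]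

theorem normW_restrZ_le {V : Word → ℝ} (hV : ∀ s, 0 ≤ V s) (f : Word → ℂ) :
    normW V (restrZ f) ≤ normW V f := by
  refine normW_le_normW fun s => mul_le_mul_of_nonneg_left ?_ (hV s)
  by_cases hs : Letter.w ∈ s <;> simp [restrZ, hs]

theorem normW_starComp_sub_restrZ_le {V : Word → ℝ} (hV : ∀ s, 0 ≤ V s) (f g : Word → ℂ) :
    normW V (fun s => starComp f g s - restrZ f s) ≤ normW V (starComp f g) := by
  refine normW_le_normW fun s => mul_le_mul_of_nonneg_left ?_ (hV s)
  by_cases hs : Letter.w ∈ s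
  · simp [restrZ_of_w_mem f s hs]
  · simp [starComp_of_w_notMem f g hs, restrZ_of_w_notMem f hs]

theorem deltaF_congr {f f' : Word → ℂ} (h : ∀ s, s ≠ [] → f s = f' s) : deltaF f = deltaF f' := by
  funext s
  by_cases hs : Letter.w ∈ s
  · simp [deltaF, hs, h s (List.ne_nil_of_mem hs)]
  · simp [deltaF, hs]

theorem eq_single_nil_iff {f : Word → ℂ} :
    f = Pi.single [] 1 ↔ ∀ s, f s = if s = [] then 1 else 0 := by
  simp only [funext_iff, Pi.single_apply]

theorem restrZ_nil (f : Word → ℂ) : restrZ f [] = f [] :=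
  restrZ_of_w_notMem f List.not_mem_nil

theorem starComp_nil (f g : Word → ℂ) : starComp f g [] = f [] :=
  starComp_of_w_notMem f g List.not_mem_nil

theorem apply_nil_of_conv_restrZ {f g : Word → ℂ} (hf : f [] = 1)
    (hfg : conv (restrZ f) g = Pi.single [] 1) : g [] = 1 := by
  simpa [conv_nil, restrZ_nil, hf] using congrFun hfg []

theorem normW_inverse_le_ofReal {V : Word → ℝ} (hV : ∀ s, 0 ≤ V s)
    (hmul : ∀ s t, V (s ++ t) ≤ V s * V t) (hV1 : V [] = 1) {f g : Word → ℂ} (hf : f [] = 1)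
    (hfg : conv f g = Pi.single [] 1) {Q : ℝ} (hQ : 0 < Q)
    (hfQ : normW V f < ENNReal.ofReal (2 - 1 / Q)) : normW V g ≤ ENNReal.ofReal Q :=
  (normW_inverse_le hV hmul hV1 hf hfg).trans (inv_two_sub_le_ofReal hQ hfQ)

theorem normW_add_conv_lt_top {V : Word → ℝ} (hV : ∀ s, 0 ≤ V s)
    (hmul : ∀ s t, V (s ++ t) ≤ V s * V t) {f g h : Word → ℂ} (hf : normW V f < ⊤)
    (hg : normW V g < ⊤) (hh : normW V h < ⊤) : normW V (fun s => f s + conv g h s) < ⊤ :=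
  (normW_add_le hV _ _).trans_lt <| ENNReal.add_lt_top.2
    ⟨hf, (normW_conv_le hV hV hmul g h).trans_lt (ENNReal.mul_lt_top hg hh)⟩

theorem normW_starComp_lt_ofReal {W : Word → ℝ} (hW : ∀ s, 0 ≤ W s)
    (hWmul : ∀ s t, W (s ++ t) ≤ W s * W t) (hW1 : W [] = 1)
    (hWcomm : ∀ s t, W (s ++ t) = W (t ++ s)) {Q : ℝ} (hQ : 0 < Q) {f g : Word → ℂ}
    (hf : f [] = 1) (hg : ∀ s, Letter.w ∈ s → g s = 0)
    (hfg : conv (restrZ f) g = Pi.single [] 1) (hfQ : normW W f < ENNReal.ofReal (2 - 1 / Q)) :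
    normW (twistWeight W Q) (starComp f g) < ENNReal.ofReal (2 - 1 / Q) := by
  have hgQ : normW W g ≤ ENNReal.ofReal Q := normW_inverse_le_ofReal hW hWmul hW1
    ((restrZ_nil f).trans hf) hfg hQ ((normW_restrZ_le hW f).trans_lt hfQ)
  exact (normW_starComp_le hW hWmul hWcomm hQ hg hgQ f).trans_lt hfQ

end Identity

/-- if `‖M{z,w}‖_W < 2 − 1/Q` and `‖L{z,0}‖_W < ∞` (with `W` a weight
function, `W(1) = 1`, `W(st) = W(ts)`, `Q > 1/2`), then all the terms of the identity
`L{z,w} = L{z,0} + (M⋆{z,w} − M{z,0}) ⋆ M⋆⁻¹{z,w}` have finite `‖·‖_{W̃}`-norm,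
where `W̃(s) = W(s)Q^{−m(s)}`; in particular `‖M⋆⁻¹{z,w}‖_{W̃} ≤ Q`,
`‖M⋆{z,w}‖_{W̃} < 2 − 1/Q`, `L{z,w} ∈ l¹(S,W̃)` and the identity holds in
`l¹(S,W̃)`. -/
theorem cumulant_generating_function_formula_l1 (M L : Word → ℂ)
    (hM1 : M [] = 1) (hL : IsCumulants M L)
    (Lgen : Word → ℂ) (hLgen : Lgen [] = 0)
    (hLgen' : ∀ s : Word, s ≠ [] → Lgen s = L s / (nFact s : ℂ))
    (Minv0 : Word → ℂ) (hMinv0supp : ∀ s : Word, Letter.w ∈ s → Minv0 s = 0)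
    (hMinv0₁ : ∀ s : Word, conv (restrZ (genFun M)) Minv0 s = if s = [] then 1 else 0)
    (hMinv0₂ : ∀ s : Word, conv Minv0 (restrZ (genFun M)) s = if s = [] then 1 else 0)
    (G : Word → Word → ℂ) (hG : IsStarAux (genFun M) Minv0 G)
    (Mstarinv : Word → ℂ)
    (hMsi₁ : ∀ s : Word, conv (fun t => G [] t) Mstarinv s = if s = [] then 1 else 0)
    (hMsi₂ : ∀ s : Word, conv Mstarinv (fun t => G [] t) s = if s = [] then 1 else 0)
    (W : Word → ℝ)
    (hWpos : ∀ s, 0 < W s) (hWsub : ∀ s t : Word, W (s ++ t) ≤ W s * W t)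
    (hW1 : W [] = 1) (hWcomm : ∀ s t : Word, W (s ++ t) = W (t ++ s))
    (Q : ℝ) (hQ : 1 / 2 < Q)
    (hMW : normW W (genFun M) < ENNReal.ofReal (2 - 1 / Q))
    (hLW : normW W (restrZ Lgen) < ⊤) :
    normW (fun s => W s * (Q ^ s.count Letter.w)⁻¹) Mstarinv ≤ ENNReal.ofReal Q ∧
      normW (fun s => W s * (Q ^ s.count Letter.w)⁻¹) (fun t => G [] t) <
        ENNReal.ofReal (2 - 1 / Q) ∧
      normW (fun s => W s * (Q ^ s.count Letter.w)⁻¹) Lgen < ⊤ ∧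
      normW (fun s => W s * (Q ^ s.count Letter.w)⁻¹) (restrZ Lgen) < ⊤ ∧
      normW (fun s => W s * (Q ^ s.count Letter.w)⁻¹)
          (fun t => G [] t - restrZ (genFun M) t) < ⊤ ∧
      ∀ s : Word,
        Lgen s =
          restrZ Lgen s +
            conv (fun t => G [] t - restrZ (genFun M) t) Mstarinv s := by
  have hQ0 : 0 < Q := by linarith
  have hW (s : Word) : 0 ≤ W s := (hWpos s).le
  have hV := twistWeight_nonneg hW hQ0.le
  have hVmul (s t : Word) := twistWeight_append_le hQ0.le (hWsub s t)
  have hm : genFun M [] = 1 := (genFun_nil M).trans hM1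
  have hinv := eq_single_nil_iff.2 hMinv0₁
  simp only [hG.eq_starComp (apply_nil_of_conv_restrZ hm hinv), List.nil_append] at hMsi₁ ⊢
  have hstarinv := eq_single_nil_iff.2 hMsi₁
  have hMstar := normW_starComp_lt_ofReal hW hWsub hW1 hWcomm hQ0 hm hMinv0supp hinv hMW
  have hMstarinv := normW_inverse_le_ofReal hV hVmul (by simpa [twistWeight])
    ((starComp_nil _ _).trans hm) hstarinv hQ0 hMstar
  have hdiff := (normW_starComp_sub_restrZ_le hV (genFun M) Minv0).trans_lt
    (hMstar.trans ENNReal.ofReal_lt_top)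
  have hL0 := (normW_twistWeight_eq W Q (restrZ_of_w_mem Lgen)).trans_lt hLW
  have hformula (s : Word) : Lgen s = restrZ Lgen s +
      conv (fun t => starComp (genFun M) Minv0 t - restrZ (genFun M) t) Mstarinv s := by
    rw [conv_starComp_sub_restrZ_eq (genFun_eq_restrZ_add_conv hM1 hL) hinv hstarinv,
      ← deltaF_congr (f' := genFun L) hLgen', restrZ_add_deltaF]
  refine ⟨hMstarinv, hMstar, ?_, hL0, hdiff, hformula⟩
  rw [funext hformula]
  exact normW_add_conv_lt_top hV hVmul hL0 hdiff (hMstarinv.trans_lt ENNReal.ofReal_lt_top)
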